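/- Let λ > 0 and 0 < α < 1, and let f ∈ C^α_+ satisfy ∫₀^∞ |f(y)|/(1+y)^{1+λ} dy < ∞. Then the function v(x,t) := ∫₀^∞ P_t^λ(x,y) f(y) dy is well defined on ℝ₊ × (0,∞), is twice continuously differentiable there, satisfies the Bessel harmonic extension equation ∂_t² v(x,t) + ∂_x² v(x,t) − (λ(λ−1)/x²) v(x,t) = 0 for all x > 0 and t > 0, and attains the boundary datum: lim_{t→0⁺} v(x,t) = f(x) for every x > 0. -/

import Mathlib

open Real MeasureTheory Set Filter

noncomputable section

/-- The modified Bessel function of the first kind `I_ν(z)`. -/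
def besselI (ν z : ℝ) : ℝ :=
  ∑' k : ℕ, (z / 2) ^ (2 * (k : ℝ) + ν) / ((Nat.factorial k : ℝ) * Real.Gamma ((k : ℝ) + ν + 1))

/-- The Bessel heat kernel `W_t^λ(x,y)`. -/
def besselHeatKernel (lam t x y : ℝ) : ℝ :=
  Real.sqrt (x * y) / (2 * t) * besselI (lam - 1 / 2) (x * y / (2 * t)) *
    Real.exp (-(x ^ 2 + y ^ 2) / (4 * t))

/-- The Bessel–Poisson kernel `P_t^λ(x,y)`, obtained by subordination. -/
def besselPoissonKernel (lam t x y : ℝ) : ℝ :=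
  t / (2 * Real.sqrt Real.pi) *
    ∫ s in Set.Ioi (0 : ℝ),
      s ^ (-(3 : ℝ) / 2) * Real.exp (-t ^ 2 / (4 * s)) * besselHeatKernel lam s x y

/-- The Bessel heat semigroup `W_t^λ u (x)`. -/
def heatSemigroup (lam : ℝ) (u : ℝ → ℝ) (t x : ℝ) : ℝ :=
  ∫ y in Set.Ioi (0 : ℝ), besselHeatKernel lam t x y * u y

/-- The Bessel–Poisson semigroup `P_t^λ f (x)`. -/
def poissonSemigroup (lam : ℝ) (f : ℝ → ℝ) (t x : ℝ) : ℝ :=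
  ∫ y in Set.Ioi (0 : ℝ), besselPoissonKernel lam t x y * f y

/-- The set of Hölder quotients of `f` on `(0,∞)`. -/
def holderRatioSet (α : ℝ) (f : ℝ → ℝ) : Set ℝ :=
  {r | ∃ x y : ℝ, 0 < x ∧ 0 < y ∧ x ≠ y ∧ r = |f x - f y| / |x - y| ^ α}

/-- The set of growth quotients `|f x|/x^α` of `f` on `(0,∞)`. -/
def growthRatioSet (α : ℝ) (f : ℝ → ℝ) : Set ℝ :=
  {r | ∃ x : ℝ, 0 < x ∧ r = |f x| / x ^ α}

/-- Membership in the Hölder space `C^α_+` (equal to `Lip_+` when `α = 1`). -/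
def MemHolderPlus (α : ℝ) (f : ℝ → ℝ) : Prop :=
  ContinuousOn f (Set.Ioi 0) ∧ BddAbove (holderRatioSet α f) ∧ BddAbove (growthRatioSet α f)

/-- The `C^α_+` norm. -/
def holderPlusNorm (α : ℝ) (f : ℝ → ℝ) : ℝ :=
  sSup (holderRatioSet α f) + sSup (growthRatioSet α f)

/-- `Γ(-σ)`, written through the functional equation `Γ(-σ) = Γ(2-σ)/((-σ)(1-σ))`. -/
def gammaNeg (σ : ℝ) : ℝ := Real.Gamma (2 - σ) / (-σ * (1 - σ))

/-- The kernel `K_σ^λ(x,y)`. -/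
def fracKernelK (lam σ x y : ℝ) : ℝ :=
  1 / (-gammaNeg σ) * ∫ t in Set.Ioi (0 : ℝ), besselHeatKernel lam t x y * t ^ (-1 - σ)

/-- `W_t^λ 1 (x)`. -/
def heatOne (lam t x : ℝ) : ℝ := ∫ y in Set.Ioi (0 : ℝ), besselHeatKernel lam t x y

/-- The function `B_σ^λ(x)`. -/
def fracFunB (lam σ x : ℝ) : ℝ :=
  1 / gammaNeg σ * ∫ t in Set.Ioi (0 : ℝ), (heatOne lam t x - 1) * t ^ (-1 - σ)

/-- The integer `m` with `m - 1 ≤ β < m`. -/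
def fracOrder (β : ℝ) : ℕ := Nat.floor β + 1

/-- The Segovia–Wheeden fractional derivative `∂_t^β F(t)`, a complex number. -/
def fracDeriv (β : ℝ) (F : ℝ → ℝ) (t : ℝ) : ℂ :=
  Complex.exp (-(Real.pi * ((fracOrder β : ℝ) - β)) * Complex.I) /
      Complex.ofReal (Real.Gamma ((fracOrder β : ℝ) - β)) *
    Complex.ofReal
      (∫ s in Set.Ioi (0 : ℝ),
        iteratedDeriv (fracOrder β) F (t + s) * s ^ ((fracOrder β : ℝ) - β - 1))

/-!
Integrating the series of `I_{λ-1/2}` against the subordination density term by term gives the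
closed form
`P_t^λ(x,y) = c_λ t (xy)^λ (x² + y² + t²)^{-(λ+1)} ₂F₁((λ+1)/2, (λ+2)/2; λ+1/2; z)`
with `z = (2xy / (x² + y² + t²))²`. In terms of `a = (1 + y²)⁻¹` this is a weight depending only on
`y` times a function of `(x, t, a)` that is smooth up to `a = 0` and `a = 1`. Thus `a` ranges over a
compact set, which justifies differentiating under the integral as soon as the weight times `f` is
integrable, and the extension equation for the kernel is the hypergeometric equation. For the
boundary values, `y ↦ y^λ` is invariant under the semigroup, so the kernel weighted by `(y/x)^λ` has
mass one, while off the diagonal the closed form is `O(t)` uniformly in `y`.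
-/

/-! ### The Gauss hypergeometric function -/

section Hypergeometric

variable {𝕜 : Type*} [RCLike 𝕜]

lemma one_le_radius_ordinaryHypergeometricSeries (a b c : 𝕜) :
    1 ≤ (ordinaryHypergeometricSeries 𝕜 a b c).radius := by
  by_cases h : ∀ k : ℕ, (k : 𝕜) ≠ -a ∧ (k : 𝕜) ≠ -b ∧ (k : 𝕜) ≠ -c
  · exact (ordinaryHypergeometricSeries_radius_eq_one 𝕜 a b c h).ge
  · obtain ⟨k, hk⟩ : ∃ k : ℕ, (k : 𝕜) = -a ∨ (k : 𝕜) = -b ∨ (k : 𝕜) = -c := by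
      by_contra! h'
      exact h h'
    exact le_top.trans_eq (FormalMultilinearSeries.radius_eq_top_of_forall_image_add_eq_zero _
      (k + 1) fun n => ordinaryHypergeometricSeries_eq_zero_of_neg_nat a b c hk (by lia)).symm

lemma ordinaryHypergeometricCoefficient_succ_mul (a b c : 𝕜) (n : ℕ) :
    (n + 1) * ordinaryHypergeometricCoefficient a b c (n + 1) =
      a * b / c * ordinaryHypergeometricCoefficient (a + 1) (b + 1) (c + 1) n := by
  have hn : (n + 1 : 𝕜) ≠ 0 := n.cast_add_one_ne_zero
  simp only [ordinaryHypergeometricCoefficient, ascPochhammer_succ_left, Polynomial.eval_mul,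
    Polynomial.eval_X, Polynomial.eval_comp, Polynomial.eval_add, Polynomial.eval_one,
    Nat.factorial_succ, Nat.cast_mul, Nat.cast_add, Nat.cast_one, mul_inv]
  field_simp

lemma ordinaryHypergeometricCoefficient_recurrence {a b c : 𝕜} {n : ℕ} (hc : c + n ≠ 0) :
    (n + 1) * (c + n) * ordinaryHypergeometricCoefficient a b c (n + 1) =
      (a + n) * (b + n) * ordinaryHypergeometricCoefficient a b c n := by
  have hn : (n + 1 : 𝕜) ≠ 0 := n.cast_add_one_ne_zero
  simp only [ordinaryHypergeometricCoefficient, ascPochhammer_succ_eval, Nat.factorial_succ,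
    Nat.cast_mul, Nat.cast_add, Nat.cast_one, mul_inv]
  field_simp

lemma hasFPowerSeriesOnBall_ordinaryHypergeometric (a b c : 𝕜) :
    HasFPowerSeriesOnBall (₂F₁ a b c) (ordinaryHypergeometricSeries 𝕜 a b c) 0 1 :=
  (FormalMultilinearSeries.hasFPowerSeriesOnBall _
    (one_pos.trans_le (one_le_radius_ordinaryHypergeometricSeries a b c))).mono one_pos
    (one_le_radius_ordinaryHypergeometricSeries a b c)

lemma mem_eball_zero_one_iff {z : 𝕜} : z ∈ Metric.eball (0 : 𝕜) 1 ↔ ‖z‖ < 1 := by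
  rw [Metric.mem_eball, edist_zero_right, ← ofReal_norm, ENNReal.ofReal_lt_one]

lemma hasSum_ordinaryHypergeometric (a b c : 𝕜) {z : 𝕜} (hz : ‖z‖ < 1) :
    HasSum (fun n => ordinaryHypergeometricCoefficient a b c n * z ^ n) (₂F₁ a b c z) := by
  simpa only [ordinaryHypergeometricSeries_apply_eq, smul_eq_mul, zero_add] using
    (hasFPowerSeriesOnBall_ordinaryHypergeometric a b c).hasSum (mem_eball_zero_one_iff.2 hz)

lemma contDiffAt_ordinaryHypergeometric (a b c : 𝕜) {z : 𝕜} (hz : ‖z‖ < 1) {n : WithTop ℕ∞} :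
    ContDiffAt 𝕜 n (₂F₁ a b c) z :=
  ((hasFPowerSeriesOnBall_ordinaryHypergeometric a b c).analyticOnNhd z
    (mem_eball_zero_one_iff.2 hz)).contDiffAt

lemma hasSum_deriv_ordinaryHypergeometric (a b c : 𝕜) {z : 𝕜} (hz : ‖z‖ < 1) :
    HasSum (fun n : ℕ => (n + 1) * ordinaryHypergeometricCoefficient a b c (n + 1) * z ^ n)
      (deriv (₂F₁ a b c) z) := by
  have hs := ((hasFPowerSeriesOnBall_ordinaryHypergeometric a b c).fderiv.hasSum
    (mem_eball_zero_one_iff.2 hz)).mapL (ContinuousLinearMap.apply 𝕜 𝕜 1)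
  rw [zero_add, ContinuousLinearMap.apply_apply, fderiv_apply_one_eq_deriv] at hs
  refine hs.congr_fun fun n => ?_
  simp [ordinaryHypergeometricSeries, FormalMultilinearSeries.coeff_ofScalars]
  ring

lemma deriv_ordinaryHypergeometric (a b c : 𝕜) {z : 𝕜} (hz : ‖z‖ < 1) :
    deriv (₂F₁ a b c) z = a * b / c * ₂F₁ (a + 1) (b + 1) (c + 1) z := by
  refine (hasSum_deriv_ordinaryHypergeometric a b c hz).unique
    (((hasSum_ordinaryHypergeometric (a + 1) (b + 1) (c + 1) hz).mul_left _).congr_fun fun n => ?_)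
  rw [ordinaryHypergeometricCoefficient_succ_mul, mul_assoc]

lemma hasSum_deriv_deriv_ordinaryHypergeometric (a b c : 𝕜) {z : 𝕜} (hz : ‖z‖ < 1) :
    HasSum (fun n : ℕ => (n + 1) * (n + 2) * ordinaryHypergeometricCoefficient a b c (n + 2) *
      z ^ n) (deriv (deriv (₂F₁ a b c)) z) := by
  have h : deriv (₂F₁ a b c) =ᶠ[nhds z] fun w => a * b / c * ₂F₁ (a + 1) (b + 1) (c + 1) w := by
    filter_upwards [(isOpen_lt continuous_norm continuous_const).mem_nhds hz] with w hw
      using deriv_ordinaryHypergeometric a b c hw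
  rw [h.deriv_eq, deriv_const_mul_field]
  refine ((hasSum_deriv_ordinaryHypergeometric (a + 1) (b + 1) (c + 1) hz).mul_left
    (a * b / c)).congr_fun fun n => ?_
  have hA := ordinaryHypergeometricCoefficient_succ_mul a b c (n + 1)
  push_cast at hA
  linear_combination (n + 1) * z ^ n * hA

lemma hasSum_mul_pow_of_zero {u : ℕ → 𝕜} {z s : 𝕜} (h0 : u 0 = 0)
    (h : HasSum (fun n => u (n + 1) * z ^ n) s) : HasSum (fun n => u n * z ^ n) (z * s) := by
  refine (hasSum_nat_add_iff' 1).1 ?_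
  simpa [h0, pow_succ', mul_left_comm] using h.mul_left z

lemma ordinaryHypergeometric_ode {a b c : 𝕜} (hc : ∀ n : ℕ, c + n ≠ 0) {z : 𝕜} (hz : ‖z‖ < 1) :
    z * (1 - z) * deriv (deriv (₂F₁ a b c)) z + (c - (a + b + 1) * z) * deriv (₂F₁ a b c) z =
      a * b * ₂F₁ a b c z := by
  set A := ordinaryHypergeometricCoefficient a b c
  have hF : HasSum (fun n => A n * z ^ n) (₂F₁ a b c z) := hasSum_ordinaryHypergeometric a b c hz
  have hF' : HasSum (fun n : ℕ => (n + 1) * A (n + 1) * z ^ n) (deriv (₂F₁ a b c) z) :=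
    hasSum_deriv_ordinaryHypergeometric a b c hz
  have hzF' : HasSum (fun n : ℕ => n * A n * z ^ n) (z * deriv (₂F₁ a b c) z) :=
    hasSum_mul_pow_of_zero (by simp) (by simpa using hF')
  have hzF'' : HasSum (fun n : ℕ => n * (n + 1) * A (n + 1) * z ^ n)
      (z * deriv (deriv (₂F₁ a b c)) z) :=
    hasSum_mul_pow_of_zero (u := fun n => n * (n + 1) * A (n + 1)) (by simp) (by
      simpa [add_assoc, one_add_one_eq_two] using
        hasSum_deriv_deriv_ordinaryHypergeometric a b c hz)
  have hzzF'' : HasSum (fun n : ℕ => n * (n - 1) * A n * z ^ n)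
      (z * (z * deriv (deriv (₂F₁ a b c)) z)) :=
    hasSum_mul_pow_of_zero (u := fun n => n * (n - 1) * A n) (by simp) (by
      simpa [mul_comm] using hzF'')
  have key := ((hzF''.add (hF'.mul_left c)).sub (hzzF''.add (hzF'.mul_left (a + b + 1)))).sub
    (hF.mul_left (a * b))
  have h0 := key.unique (hasSum_zero.congr_fun fun n => by
    linear_combination
      z ^ n * ordinaryHypergeometricCoefficient_recurrence (a := a) (b := b) (hc n))
  linear_combination h0

end Hypergeometric

section HypergeometricReal

variable {a b c : ℝ}

lemma ordinaryHypergeometricCoefficient_pos (ha : 0 < a) (hb : 0 < b) (hc : 0 < c) (n : ℕ) :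
    0 < ordinaryHypergeometricCoefficient a b c n := by
  have := ascPochhammer_pos n a ha
  have := ascPochhammer_pos n b hb
  have := ascPochhammer_pos n c hc
  unfold ordinaryHypergeometricCoefficient
  positivity

lemma ordinaryHypergeometric_nonneg (ha : 0 < a) (hb : 0 < b) (hc : 0 < c) {z : ℝ} (hz : 0 ≤ z)
    (hz1 : z < 1) : 0 ≤ ₂F₁ a b c z :=
  (hasSum_ordinaryHypergeometric a b c (by rwa [Real.norm_of_nonneg hz])).nonneg fun n =>
    mul_nonneg (ordinaryHypergeometricCoefficient_pos ha hb hc n).le (pow_nonneg hz n)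

lemma monotoneOn_ordinaryHypergeometric (ha : 0 < a) (hb : 0 < b) (hc : 0 < c) :
    MonotoneOn (₂F₁ a b c : ℝ → ℝ) (Ico 0 1) := by
  intro w hw z hz hwz
  refine hasSum_le (fun n => ?_)
    (hasSum_ordinaryHypergeometric a b c (by rw [Real.norm_of_nonneg hw.1]; exact hw.2))
    (hasSum_ordinaryHypergeometric a b c (by rw [Real.norm_of_nonneg hz.1]; exact hz.2))
  have := (ordinaryHypergeometricCoefficient_pos ha hb hc n).le
  have := hw.1
  gcongr

end HypergeometricReal

/-! ### Integrals of smooth families over a compact set of parameters -/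

section ParametricIntegral

variable {E F G Y : Type*} [TopologicalSpace E] [TopologicalSpace G]
  [NormedAddCommGroup F] {K : Set G} {R : E → G → F} {p : E}

lemma exists_eventually_forall_norm_le (hK : IsCompact K)
    (hR : ∀ k ∈ K, ContinuousAt (Function.uncurry R) (p, k)) :
    ∃ C, ∀ᶠ q in nhds p, ∀ k ∈ K, ‖R q k‖ ≤ C := by
  obtain ⟨C, hC⟩ := hK.exists_bound_of_continuousOn (f := R p) fun k hk =>
    ((hR k hk).comp (f := Prod.mk p) (by fun_prop)).continuousWithinAt
  refine ⟨C + 1, hK.eventually_forall_of_forall_eventually fun k hk => ?_⟩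
  filter_upwards [(hR k hk).norm.eventually_lt_const ((hC k hk).trans_lt (lt_add_one C))]
    with z hz using hz.le

variable [T2Space G] [MeasurableSpace G] [OpensMeasurableSpace G] [MeasurableSpace Y]
  {μ : Measure Y} {g : Y → ℝ} {a : Y → G}

lemma aestronglyMeasurable_comp_of_isCompact (hK : IsCompact K)
    {φ : G → F} (hφ : ContinuousOn φ K) (ha : Measurable a) (haK : ∀ y, a y ∈ K) :
    AEStronglyMeasurable (fun y => φ (a y)) μ := by
  have hμ : (μ.map a).restrict K = μ.map a := Measure.restrict_eq_self_of_ae_mem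
    ((ae_map_iff ha.aemeasurable hK.measurableSet).2 (Eventually.of_forall haK))
  exact (hμ ▸ hφ.aestronglyMeasurable_of_isCompact hK hK.measurableSet :
    AEStronglyMeasurable φ (μ.map a)).comp_measurable ha

variable [NormedSpace ℝ F]

lemma integrable_smul_comp_of_isCompact (hK : IsCompact K)
    {φ : G → F} (hφ : ContinuousOn φ K) (ha : Measurable a) (haK : ∀ y, a y ∈ K)
    (hg : Integrable g μ) : Integrable (fun y => g y • φ (a y)) μ := by
  obtain ⟨C, hC⟩ := hK.exists_bound_of_continuousOn hφ
  exact hg.smul_bdd C (aestronglyMeasurable_comp_of_isCompact hK hφ ha haK)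
    (Eventually.of_forall fun y => hC _ (haK y))

end ParametricIntegral

section SmoothParametricIntegral

variable {E F G Y : Type*} [NormedAddCommGroup E] [NormedSpace ℝ E]
  [NormedAddCommGroup F] [NormedSpace ℝ F] [NormedAddCommGroup G] [NormedSpace ℝ G]
  {K : Set G} {R : E → G → F} {p : E}

lemma continuousOn_of_contDiffAt_uncurry {n : WithTop ℕ∞}
    (hR : ∀ k ∈ K, ContDiffAt ℝ n (Function.uncurry R) (p, k)) : ContinuousOn (R p) K :=
  fun k hk => ((hR k hk).continuousAt.comp (f := Prod.mk p) (by fun_prop)).continuousWithinAt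

lemma contDiffAt_uncurry_fderiv {m n : WithTop ℕ∞} {k : G} (hmn : m + 1 ≤ n)
    (hR : ContDiffAt ℝ n (Function.uncurry R) (p, k)) :
    ContDiffAt ℝ m (Function.uncurry fun q k => fderiv ℝ (fun q' => R q' k) q) (p, k) :=
  ContDiffAt.fderiv (f := fun z q => R q z.2) (g := Prod.fst)
    (ContDiffAt.comp (f := fun w : (E × G) × E => (w.2, w.1.2)) ((p, k), p) hR (by fun_prop))
    contDiffAt_fst hmn

lemma differentiableAt_of_contDiffAt_uncurry {n : WithTop ℕ∞} {k : G} (hn : n ≠ 0)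
    (hR : ContDiffAt ℝ n (Function.uncurry R) (p, k)) :
    DifferentiableAt ℝ (fun q => R q k) p :=
  DifferentiableAt.comp (f := fun q => (q, k)) p (hR.differentiableAt hn) (by fun_prop)

lemma eventually_forall_contDiffAt_uncurry (hK : IsCompact K) {n : ℕ}
    (hR : ∀ k ∈ K, ContDiffAt ℝ n (Function.uncurry R) (p, k)) :
    ∀ᶠ q in nhds p, ∀ k ∈ K, ContDiffAt ℝ n (Function.uncurry R) (q, k) :=
  hK.eventually_forall_of_forall_eventually fun k hk => (hR k hk).eventually (by simp)

variable [MeasurableSpace G] [OpensMeasurableSpace G] [MeasurableSpace Y]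
  {μ : Measure Y} {g : Y → ℝ} {a : Y → G}

lemma hasFDerivAt_integral_smul_of_isCompact (hK : IsCompact K)
    (hR : ∀ k ∈ K, ContDiffAt ℝ 1 (Function.uncurry R) (p, k)) (ha : Measurable a)
    (haK : ∀ y, a y ∈ K) (hg : Integrable g μ) :
    HasFDerivAt (fun p => ∫ y, g y • R p (a y) ∂μ)
      (∫ y, g y • fderiv ℝ (fun q => R q (a y)) p ∂μ) p := by
  have hR' : ∀ k ∈ K, ContDiffAt ℝ 0
      (Function.uncurry fun q k => fderiv ℝ (fun q' => R q' k) q) (p, k) :=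
    fun k hk => contDiffAt_uncurry_fderiv (by simp) (hR k hk)
  have hsmooth := eventually_forall_contDiffAt_uncurry (n := 1) hK (by simpa using hR)
  obtain ⟨C, hC⟩ := exists_eventually_forall_norm_le hK fun k hk => (hR' k hk).continuousAt
  refine hasFDerivAt_integral_of_dominated_of_fderiv_le (bound := fun y => ‖g y‖ * C)
    (F' := fun q y => g y • fderiv ℝ (fun q' => R q' (a y)) q) (hsmooth.and hC) ?_
    (integrable_smul_comp_of_isCompact hK (continuousOn_of_contDiffAt_uncurry hR) ha haK hg)
    (integrable_smul_comp_of_isCompact hK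
      (continuousOn_of_contDiffAt_uncurry hR') ha haK hg).aestronglyMeasurable ?_
    (hg.norm.mul_const C) ?_
  · filter_upwards [hsmooth] with q hq
    exact (integrable_smul_comp_of_isCompact hK
      (continuousOn_of_contDiffAt_uncurry hq) ha haK hg).aestronglyMeasurable
  · refine Eventually.of_forall fun y q hq => ?_
    rw [norm_smul]
    exact mul_le_mul_of_nonneg_left (hq.2 _ (haK y)) (norm_nonneg _)
  · refine Eventually.of_forall fun y q hq => ?_
    exact (differentiableAt_of_contDiffAt_uncurry (by simp)
      (hq.1 _ (haK y))).hasFDerivAt.const_smul _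

lemma continuousAt_integral_smul_of_isCompact (hK : IsCompact K)
    (hR : ∀ k ∈ K, ContDiffAt ℝ 0 (Function.uncurry R) (p, k)) (ha : Measurable a)
    (haK : ∀ y, a y ∈ K) (hg : Integrable g μ) :
    ContinuousAt (fun p => ∫ y, g y • R p (a y) ∂μ) p := by
  obtain ⟨C, hC⟩ := exists_eventually_forall_norm_le hK fun k hk => (hR k hk).continuousAt
  refine continuousAt_of_dominated (bound := fun y => ‖g y‖ * C) ?_ ?_ (hg.norm.mul_const C) ?_
  · filter_upwards [eventually_forall_contDiffAt_uncurry (n := 0) hK hR] with q hq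
    exact (integrable_smul_comp_of_isCompact hK
      (continuousOn_of_contDiffAt_uncurry hq) ha haK hg).aestronglyMeasurable
  · filter_upwards [hC] with q hq
    refine Eventually.of_forall fun y => ?_
    rw [norm_smul]
    exact mul_le_mul_of_nonneg_left (hq _ (haK y)) (norm_nonneg _)
  · refine Eventually.of_forall fun y => ContinuousAt.const_smul ?_ _
    exact (hR _ (haK y)).continuousAt.comp (f := fun q => (q, a y)) (by fun_prop)

end SmoothParametricIntegral

section SmoothParametricIntegralInduction

universe u

variable {E F : Type u} {G Y : Type*} [NormedAddCommGroup E] [NormedSpace ℝ E]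
  [NormedAddCommGroup F] [NormedSpace ℝ F] [NormedAddCommGroup G] [NormedSpace ℝ G]
  [MeasurableSpace G] [OpensMeasurableSpace G] [MeasurableSpace Y]
  {μ : Measure Y} {g : Y → ℝ} {a : Y → G} {K : Set G}

lemma contDiffAt_integral_smul_of_isCompact (hK : IsCompact K) {n : ℕ} {R : E → G → F} {p : E}
    (hR : ∀ k ∈ K, ContDiffAt ℝ n (Function.uncurry R) (p, k)) (ha : Measurable a)
    (haK : ∀ y, a y ∈ K) (hg : Integrable g μ) :
    ContDiffAt ℝ n (fun p => ∫ y, g y • R p (a y) ∂μ) p := by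
  induction n generalizing F p with
  | zero =>
    refine contDiffAt_zero.2 ⟨_, eventually_forall_contDiffAt_uncurry hK hR, fun q hq => ?_⟩
    exact (continuousAt_integral_smul_of_isCompact hK hq ha haK hg).continuousWithinAt
  | succ n ih =>
    push_cast at hR ⊢
    refine contDiffAt_succ_iff_hasFDerivAt.2
      ⟨fun q => ∫ y, g y • fderiv ℝ (fun q' => R q' (a y)) q ∂μ,
        ⟨_, eventually_forall_contDiffAt_uncurry (n := n + 1) hK (by simpa using hR),
          fun q hq => ?_⟩,
        ih fun k hk => contDiffAt_uncurry_fderiv le_rfl (hR k hk)⟩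
    exact hasFDerivAt_integral_smul_of_isCompact hK
      (fun k hk => (hq k hk).of_le (by simp)) ha haK hg

end SmoothParametricIntegralInduction

section ParametricIntegralDeriv

variable {F G Y : Type*} [NormedAddCommGroup F] [NormedSpace ℝ F] [NormedAddCommGroup G]
  [NormedSpace ℝ G] {K : Set G} {R : ℝ → G → F} {p : ℝ}

lemma contDiffAt_uncurry_deriv {m n : WithTop ℕ∞} {k : G} (hmn : m + 1 ≤ n)
    (hR : ContDiffAt ℝ n (Function.uncurry R) (p, k)) :
    ContDiffAt ℝ m (Function.uncurry fun q k => deriv (fun q' => R q' k) q) (p, k) :=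
  (contDiffAt_uncurry_fderiv hmn hR).clm_apply contDiffAt_const

variable [MeasurableSpace G] [OpensMeasurableSpace G] [MeasurableSpace Y]
  {μ : Measure Y} {g : Y → ℝ} {a : Y → G}

lemma deriv_integral_smul_of_isCompact (hK : IsCompact K)
    (hR : ∀ k ∈ K, ContDiffAt ℝ 1 (Function.uncurry R) (p, k)) (ha : Measurable a)
    (haK : ∀ y, a y ∈ K) (hg : Integrable g μ) :
    deriv (fun q => ∫ y, g y • R q (a y) ∂μ) p =
      ∫ y, g y • deriv (fun q => R q (a y)) p ∂μ := by
  have hint : Integrable (fun y => g y • fderiv ℝ (fun q => R q (a y)) p) μ :=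
    integrable_smul_comp_of_isCompact hK (continuousOn_of_contDiffAt_uncurry fun k hk =>
      contDiffAt_uncurry_fderiv (m := 0) (by simp) (hR k hk)) ha haK hg
  rw [(hasFDerivAt_integral_smul_of_isCompact hK hR ha haK hg).hasDerivAt.deriv,
    ContinuousLinearMap.integral_apply hint]
  rfl

lemma deriv_deriv_integral_smul_of_isCompact (hK : IsCompact K)
    (hR : ∀ k ∈ K, ContDiffAt ℝ 2 (Function.uncurry R) (p, k)) (ha : Measurable a)
    (haK : ∀ y, a y ∈ K) (hg : Integrable g μ) :
    deriv (deriv fun q => ∫ y, g y • R q (a y) ∂μ) p =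
      ∫ y, g y • deriv (deriv fun q => R q (a y)) p ∂μ := by
  have hderiv : deriv (fun q => ∫ y, g y • R q (a y) ∂μ) =ᶠ[nhds p]
      fun q => ∫ y, g y • deriv (fun q' => R q' (a y)) q ∂μ := by
    filter_upwards [eventually_forall_contDiffAt_uncurry (n := 2) hK (by simpa using hR)] with q hq
    exact deriv_integral_smul_of_isCompact hK
      (fun k hk => (hq k hk).of_le (by norm_num)) ha haK hg
  rw [hderiv.deriv_eq]
  exact deriv_integral_smul_of_isCompact hK
    (fun k hk => contDiffAt_uncurry_deriv (by norm_num) (hR k hk)) ha haK hg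

lemma integrable_smul_deriv_deriv_of_isCompact (hK : IsCompact K)
    (hR : ∀ k ∈ K, ContDiffAt ℝ 2 (Function.uncurry R) (p, k)) (ha : Measurable a)
    (haK : ∀ y, a y ∈ K) (hg : Integrable g μ) :
    Integrable (fun y => g y • deriv (deriv fun q => R q (a y)) p) μ :=
  integrable_smul_comp_of_isCompact hK (φ := fun k => deriv (deriv fun q => R q k) p)
    (continuousOn_of_contDiffAt_uncurry (n := 0) fun k hk =>
      contDiffAt_uncurry_deriv (by simp)
        (contDiffAt_uncurry_deriv (m := 1) (by norm_num) (hR k hk))) ha haK hg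

end ParametricIntegralDeriv

/-! ### Peak functions against a weight -/

section WeightedPeak

variable {X E ι : Type*} [MeasurableSpace X] [NormedAddCommGroup E] [NormedSpace ℝ E]
  {μ : Measure X} {s : Set X} {w : X → ℝ}

lemma setIntegral_withDensity_toNNReal (hs : MeasurableSet s) (hw : ∀ x ∈ s, 0 ≤ w x)
    (hwi : IntegrableOn w s μ) (f : X → E) :
    ∫ x in s, f x ∂μ.withDensity (fun x => (w x).toNNReal) = ∫ x in s, w x • f x ∂μ := by
  rw [setIntegral_withDensity_eq_setIntegral_smul₀ hwi.aemeasurable.real_toNNReal _ hs]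
  exact setIntegral_congr_fun hs fun x hx => by
    simp only [NNReal.smul_def, Real.coe_toNNReal _ (hw x hx)]

lemma integrableOn_withDensity_toNNReal_iff (hs : MeasurableSet s) (hw : ∀ x ∈ s, 0 ≤ w x)
    (hwi : IntegrableOn w s μ) {f : X → E} :
    IntegrableOn f s (μ.withDensity fun x => (w x).toNNReal) ↔
      IntegrableOn (fun x => w x • f x) s μ := by
  rw [IntegrableOn, restrict_withDensity hs,
    integrable_withDensity_iff_integrable_smul₀ hwi.aemeasurable.real_toNNReal]
  exact integrableOn_congr_fun
    (fun x hx => by simp only [NNReal.smul_def, Real.coe_toNNReal _ (hw x hx)]) hs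

lemma tendsto_setIntegral_smul_peak_smul [TopologicalSpace X] [BorelSpace X] [CompleteSpace E]
    {x₀ : X} {φ : ι → X → ℝ} {g : X → E} {a : E} {l : Filter ι}
    (hs : MeasurableSet s) (hw : ∀ x ∈ s, 0 ≤ w x) (hwi : IntegrableOn w s μ)
    (hφ : ∀ᶠ i in l, ∀ x ∈ s, 0 ≤ φ i x)
    (hφm : ∀ᶠ i in l, AEStronglyMeasurable (φ i) (μ.restrict s))
    (hφ0 : ∀ U : Set X, IsOpen U → x₀ ∈ U → TendstoUniformlyOn φ 0 l (s \ U))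
    (hφ1 : Tendsto (fun i => ∫ x in s, w x • φ i x ∂μ) l (nhds 1))
    (hg : IntegrableOn (fun x => w x • g x) s μ) (hga : Tendsto g (nhdsWithin x₀ s) (nhds a)) :
    Tendsto (fun i => ∫ x in s, w x • φ i x • g x ∂μ) l (nhds a) := by
  have hfin : μ.withDensity (fun x => (w x).toNNReal) s ≠ ⊤ := by
    rw [withDensity_apply _ hs]
    exact hwi.lintegral_lt_top.ne
  have hac : (μ.withDensity fun x => (w x).toNNReal).restrict s ≪ μ.restrict s :=
    (withDensity_absolutelyContinuous _ _).restrict s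
  simp only [← setIntegral_withDensity_toNNReal hs hw hwi] at hφ1 ⊢
  exact tendsto_setIntegral_peak_smul_of_integrableOn_of_tendsto hs hs subset_rfl
    self_mem_nhdsWithin hfin hφ hφ0 hφ1 (hφm.mono fun i hi => hi.mono_ac hac)
    ((integrableOn_withDensity_toNNReal_iff hs hw hwi).2 hg) hga

end WeightedPeak

/-! ### The Poisson kernel in the compactified variable -/

lemma differentiableAt_deriv_of_contDiffAt_two {f : ℝ → ℝ} {s : ℝ} (hf : ContDiffAt ℝ 2 f s) :
    DifferentiableAt ℝ (deriv f) s :=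
  ((hf.fderiv_right (m := 1) (by norm_num)).clm_apply contDiffAt_const).differentiableAt one_ne_zero

lemma deriv_deriv_mul_comp {M W F : ℝ → ℝ} {s : ℝ} (hM : ContDiffAt ℝ 2 M s)
    (hW : ContDiffAt ℝ 2 W s) (hF : ContDiffAt ℝ 2 F (W s)) :
    deriv (deriv fun r => M r * F (W r)) s =
      deriv (deriv M) s * F (W s) +
        (2 * deriv M s * deriv W s + M s * deriv (deriv W) s) * deriv F (W s) +
        M s * deriv W s ^ 2 * deriv (deriv F) (W s) := by
  have hderiv : deriv (fun r => M r * F (W r)) =ᶠ[nhds s]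
      fun r => deriv M r * F (W r) + M r * (deriv F (W r) * deriv W r) := by
    filter_upwards [hM.eventually (by simp), hW.eventually (by simp),
      hW.continuousAt.eventually (hF.eventually (by simp))] with r hMr hWr hFr
    exact ((hMr.differentiableAt two_ne_zero).hasDerivAt.mul
      ((hFr.differentiableAt two_ne_zero).hasDerivAt.comp r
        (hWr.differentiableAt two_ne_zero).hasDerivAt)).deriv
  have hM' := (hM.differentiableAt two_ne_zero).hasDerivAt
  have hW' := (hW.differentiableAt two_ne_zero).hasDerivAt
  have hFW : HasDerivAt (fun r => F (W r)) (deriv F (W s) * deriv W s) s :=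
    (hF.differentiableAt two_ne_zero).hasDerivAt.comp s hW'
  have hM'' := (differentiableAt_deriv_of_contDiffAt_two hM).hasDerivAt
  have hW'' := (differentiableAt_deriv_of_contDiffAt_two hW).hasDerivAt
  have hF'W : HasDerivAt (fun r => deriv F (W r)) (deriv (deriv F) (W s) * deriv W s) s :=
    (differentiableAt_deriv_of_contDiffAt_two hF).hasDerivAt.comp s hW'
  rw [hderiv.deriv_eq, ((hM''.fun_mul hFW).fun_add (hM'.fun_mul (hF'W.fun_mul hW''))).deriv]
  ring

/-- The function `s ↦ s ^ m * (p * s ^ 2 + r) ^ n`: both factors of `poissonProfile` have this form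
in each of the two space-time variables. -/
def powMulQuadPow (m n p r s : ℝ) : ℝ := s ^ m * (p * s ^ 2 + r) ^ n

section PowMulQuadPow

variable {m n p r s : ℝ}

lemma contDiffAt_powMulQuadPow (hs : 0 < s) (hT : 0 < p * s ^ 2 + r) {k : WithTop ℕ∞} :
    ContDiffAt ℝ k (powMulQuadPow m n p r) s :=
  (contDiffAt_id.rpow_const_of_ne hs.ne').mul
    (ContDiffAt.rpow_const_of_ne (by fun_prop) hT.ne')

lemma hasDerivAt_powMulQuadPow (hs : 0 < s) (hT : 0 < p * s ^ 2 + r) :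
    HasDerivAt (powMulQuadPow m n p r)
      (powMulQuadPow m n p r s * (m / s + 2 * p * n * s / (p * s ^ 2 + r))) s := by
  have hquad : HasDerivAt (fun s => p * s ^ 2 + r) (p * (2 * s)) s := by
    simpa using ((hasDerivAt_pow 2 s).const_mul p).add_const r
  convert! (hasDerivAt_rpow_const (p := m) (Or.inl hs.ne')).mul
    (hquad.rpow_const (p := n) (Or.inl hT.ne')) using 1
  rw [Real.rpow_sub_one hs.ne', Real.rpow_sub_one hT.ne', powMulQuadPow]
  ring

lemma deriv_powMulQuadPow (hs : 0 < s) (hT : 0 < p * s ^ 2 + r) :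
    deriv (powMulQuadPow m n p r) s =
      powMulQuadPow m n p r s * (m / s + 2 * p * n * s / (p * s ^ 2 + r)) :=
  (hasDerivAt_powMulQuadPow hs hT).deriv

lemma deriv_deriv_powMulQuadPow (hs : 0 < s) (hT : 0 < p * s ^ 2 + r) :
    deriv (deriv (powMulQuadPow m n p r)) s =
      powMulQuadPow m n p r s * (m * (m - 1) / s ^ 2 +
        2 * p * n * (2 * m + 1) / (p * s ^ 2 + r) +
        4 * p ^ 2 * n * (n - 1) * s ^ 2 / (p * s ^ 2 + r) ^ 2) := by
  have hderiv : deriv (powMulQuadPow m n p r) =ᶠ[nhds s]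
      fun s => powMulQuadPow m n p r s * (m / s + 2 * p * n * s / (p * s ^ 2 + r)) := by
    filter_upwards [lt_mem_nhds hs, ContinuousAt.eventually_lt (f := fun _ => (0 : ℝ))
      (g := fun s => p * s ^ 2 + r) (by fun_prop) (by fun_prop) hT] with s hs hT
      using deriv_powMulQuadPow hs hT
  have hquad : HasDerivAt (fun s => p * s ^ 2 + r) (p * (2 * s)) s := by
    simpa using ((hasDerivAt_pow 2 s).const_mul p).add_const r
  rw [hderiv.deriv_eq, ((hasDerivAt_powMulQuadPow hs hT).fun_mul
    (((hasDerivAt_const s m).fun_div (hasDerivAt_id' s) hs.ne').fun_add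
      (((hasDerivAt_id' s).const_mul (2 * p * n)).fun_div hquad hT.ne'))).deriv]
  generalize p * s ^ 2 + r = T at hT
  field_simp
  ring

end PowMulQuadPow

/-- The interpolation `a * (x ^ 2 + t ^ 2) + (1 - a)`, which for `a = (1 + y ^ 2)⁻¹` is
`(x ^ 2 + y ^ 2 + t ^ 2) / (1 + y ^ 2)`. -/
def interpDenom (x t a : ℝ) : ℝ := a * (x ^ 2 + t ^ 2) + (1 - a)

/-- The quantity `(2 * x * y / (x ^ 2 + y ^ 2 + t ^ 2)) ^ 2` written in terms of
`a = (1 + y ^ 2)⁻¹`. -/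
def poissonArg (x t a : ℝ) : ℝ := 4 * a * (1 - a) * x ^ 2 / interpDenom x t a ^ 2

/-- The hypergeometric function in the closed form of the Bessel–Poisson kernel. -/
def poissonHypergeometric (lam : ℝ) : ℝ → ℝ := ₂F₁ ((lam + 1) / 2) ((lam + 2) / 2) (lam + 1 / 2)

/-- The Bessel–Poisson kernel in terms of `a = (1 + y ^ 2)⁻¹`, up to a factor depending only on `y`
and `lam`. Unlike `y ∈ (0, ∞)`, the parameter `a` ranges over a compact set. -/
def poissonProfile (lam x t a : ℝ) : ℝ :=
  t * x ^ lam * interpDenom x t a ^ (-(lam + 1)) * poissonHypergeometric lam (poissonArg x t a)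

section PoissonProfile

variable {lam x t a : ℝ}

lemma poissonHypergeometric_ode (hlam : 0 < lam) {z : ℝ} (hz : |z| < 1) :
    z * (1 - z) * deriv (deriv (poissonHypergeometric lam)) z +
      (lam + 1 / 2 - (lam + 5 / 2) * z) * deriv (poissonHypergeometric lam) z =
        (lam + 1) * (lam + 2) / 4 * poissonHypergeometric lam z := by
  have h := ordinaryHypergeometric_ode (a := (lam + 1) / 2) (b := (lam + 2) / 2)
    (c := lam + 1 / 2) (fun n => by positivity) hz
  unfold poissonHypergeometric
  linear_combination h

lemma poissonHypergeometric_nonneg (hlam : 0 < lam) {z : ℝ} (hz : 0 ≤ z) (hz1 : z < 1) :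
    0 ≤ poissonHypergeometric lam z :=
  ordinaryHypergeometric_nonneg (by positivity) (by positivity) (by positivity) hz hz1

lemma interpDenom_pos (hx : 0 < x) (ha : a ∈ Icc (0 : ℝ) 1) : 0 < interpDenom x t a := by
  obtain ⟨h0, h1⟩ := ha
  unfold interpDenom
  rcases h0.eq_or_lt with rfl | h0
  · simp
  · have : 0 < a * (x ^ 2 + t ^ 2) := by positivity
    linarith

lemma poissonArg_nonneg (ha : a ∈ Icc (0 : ℝ) 1) : 0 ≤ poissonArg x t a := by
  have := ha.1
  have := sub_nonneg.2 ha.2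
  unfold poissonArg
  positivity

lemma one_sub_poissonArg (hT : interpDenom x t a ≠ 0) :
    1 - poissonArg x t a =
      ((a * (x ^ 2 + t ^ 2) - (1 - a)) ^ 2 + 4 * a * (1 - a) * t ^ 2) / interpDenom x t a ^ 2 := by
  rw [poissonArg, one_sub_div (pow_ne_zero 2 hT), interpDenom]
  ring

lemma poissonArg_lt_one (hx : 0 < x) (ht : 0 < t) (ha : a ∈ Icc (0 : ℝ) 1) :
    poissonArg x t a < 1 := by
  have hT := interpDenom_pos (t := t) hx ha
  obtain ⟨h0, h1⟩ := ha
  have hnum : 0 < (a * (x ^ 2 + t ^ 2) - (1 - a)) ^ 2 + 4 * a * (1 - a) * t ^ 2 := by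
    rcases h0.eq_or_lt with rfl | h0
    · norm_num
    rcases h1.eq_or_lt with rfl | h1
    · norm_num
      positivity
    · have := sub_pos.2 h1
      positivity
  rw [← sub_pos, one_sub_poissonArg hT.ne']
  positivity

lemma abs_poissonArg_lt_one (hx : 0 < x) (ht : 0 < t) (ha : a ∈ Icc (0 : ℝ) 1) :
    |poissonArg x t a| < 1 := by
  rw [abs_of_nonneg (poissonArg_nonneg ha)]
  exact poissonArg_lt_one hx ht ha

lemma contDiffAt_poissonProfile (hx : 0 < x) (ht : 0 < t) (ha : a ∈ Icc (0 : ℝ) 1)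
    {n : WithTop ℕ∞} :
    ContDiffAt ℝ n (Function.uncurry fun p : ℝ × ℝ => poissonProfile lam p.1 p.2) ((x, t), a) := by
  have hT := (interpDenom_pos (t := t) hx ha).ne'
  have hTsmooth : ContDiffAt ℝ n (fun z : (ℝ × ℝ) × ℝ => interpDenom z.1.1 z.1.2 z.2)
      ((x, t), a) := by
    unfold interpDenom
    fun_prop
  have hW : ContDiffAt ℝ n (fun z : (ℝ × ℝ) × ℝ => poissonArg z.1.1 z.1.2 z.2) ((x, t), a) :=
    ContDiffAt.fun_div (by fun_prop) (hTsmooth.pow 2) (pow_ne_zero 2 hT)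
  have hxlam : ContDiffAt ℝ n (fun z : (ℝ × ℝ) × ℝ => z.1.1 ^ lam) ((x, t), a) :=
    ContDiffAt.rpow_const_of_ne (by fun_prop) hx.ne'
  exact ((ContDiffAt.mul (by fun_prop) hxlam).mul (hTsmooth.rpow_const_of_ne hT)).mul
    (ContDiffAt.comp ((x, t), a) (f := fun z : (ℝ × ℝ) × ℝ => poissonArg z.1.1 z.1.2 z.2)
      (contDiffAt_ordinaryHypergeometric _ _ _ (abs_poissonArg_lt_one hx ht ha)) hW)

lemma rpow_neg_two_eq_inv_sq (T : ℝ) : T ^ (-2 : ℝ) = (T ^ 2)⁻¹ := by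
  rw [Real.rpow_neg_ofNat, zpow_neg, zpow_ofNat]

lemma quad_time_eq_interpDenom (x t a : ℝ) :
    a * t ^ 2 + (a * x ^ 2 + (1 - a)) = interpDenom x t a := by
  unfold interpDenom
  ring

lemma quad_space_eq_interpDenom (x t a : ℝ) :
    a * x ^ 2 + (a * t ^ 2 + (1 - a)) = interpDenom x t a := by
  unfold interpDenom
  ring

lemma poissonArg_eq_powMulQuadPow_time (x t a : ℝ) :
    poissonArg x t a =
      4 * a * (1 - a) * x ^ 2 * powMulQuadPow 0 (-2) a (a * x ^ 2 + (1 - a)) t := by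
  rw [powMulQuadPow, quad_time_eq_interpDenom, rpow_neg_two_eq_inv_sq, Real.rpow_zero, one_mul,
    ← div_eq_mul_inv, poissonArg]

lemma poissonArg_eq_powMulQuadPow_space (x t a : ℝ) :
    poissonArg x t a =
      4 * a * (1 - a) * powMulQuadPow 2 (-2) a (a * t ^ 2 + (1 - a)) x := by
  rw [powMulQuadPow, quad_space_eq_interpDenom, rpow_neg_two_eq_inv_sq, Real.rpow_two,
    ← mul_assoc, ← div_eq_mul_inv, poissonArg]

lemma poissonProfile_eq_powMulQuadPow_time (lam x t a : ℝ) :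
    poissonProfile lam x t a =
      x ^ lam * powMulQuadPow 1 (-(lam + 1)) a (a * x ^ 2 + (1 - a)) t * poissonHypergeometric lam
        (4 * a * (1 - a) * x ^ 2 * powMulQuadPow 0 (-2) a (a * x ^ 2 + (1 - a)) t) := by
  rw [poissonProfile, ← poissonArg_eq_powMulQuadPow_time, powMulQuadPow, quad_time_eq_interpDenom,
    Real.rpow_one, mul_left_comm, mul_assoc t]

lemma poissonProfile_eq_powMulQuadPow_space (lam x t a : ℝ) :
    poissonProfile lam x t a =
      t * powMulQuadPow lam (-(lam + 1)) a (a * t ^ 2 + (1 - a)) x * poissonHypergeometric lam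
        (4 * a * (1 - a) * powMulQuadPow 2 (-2) a (a * t ^ 2 + (1 - a)) x) := by
  rw [poissonProfile, ← poissonArg_eq_powMulQuadPow_space, powMulQuadPow,
    quad_space_eq_interpDenom, mul_assoc t]

lemma deriv_deriv_mul_comp_powMulQuadPow {F : ℝ → ℝ} {m n k l p r s A B W T : ℝ} (hs : 0 < s)
    (hT : 0 < T) (hTeq : p * s ^ 2 + r = T) (hW : B * powMulQuadPow k l p r s = W)
    (hF : ContDiffAt ℝ 2 F W) :
    deriv (deriv fun s => A * powMulQuadPow m n p r s * F (B * powMulQuadPow k l p r s)) s =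
      A * powMulQuadPow m n p r s *
        ((m * (m - 1) / s ^ 2 + 2 * p * n * (2 * m + 1) / T +
            4 * p ^ 2 * n * (n - 1) * s ^ 2 / T ^ 2) * F W +
          (2 * (m / s + 2 * p * n * s / T) * (k / s + 2 * p * l * s / T) +
            (k * (k - 1) / s ^ 2 + 2 * p * l * (2 * k + 1) / T +
              4 * p ^ 2 * l * (l - 1) * s ^ 2 / T ^ 2)) * (W * deriv F W) +
          (k / s + 2 * p * l * s / T) ^ 2 * (W ^ 2 * deriv (deriv F) W)) := by
  subst hTeq hW
  rw [deriv_deriv_mul_comp (contDiffAt_const.mul (contDiffAt_powMulQuadPow hs hT))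
    (contDiffAt_const.mul (contDiffAt_powMulQuadPow hs hT)) hF]
  simp only [deriv_const_mul_field', deriv_const_mul_field, deriv_powMulQuadPow hs hT,
    deriv_deriv_powMulQuadPow hs hT]
  ring

section ProfileIdentities

variable {T : ℝ}

lemma one_sub_eq_of_interpDenom_eq (hT : interpDenom x t a = T) :
    1 - a = T - a * (x ^ 2 + t ^ 2) := by
  rw [← hT, interpDenom]
  ring

lemma poissonProfile_prefactor_identity (hT : interpDenom x t a = T) (hT0 : T ≠ 0) :
    (2 * a * -(lam + 1) * (2 * 1 + 1) / T +
        4 * a ^ 2 * -(lam + 1) * (-(lam + 1) - 1) * t ^ 2 / T ^ 2) +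
      (2 * a * -(lam + 1) * (2 * lam + 1) / T +
        4 * a ^ 2 * -(lam + 1) * (-(lam + 1) - 1) * x ^ 2 / T ^ 2) =
      -(16 * a * (1 - a) / T ^ 2) * ((lam + 1) * (lam + 2) / 4) := by
  rw [one_sub_eq_of_interpDenom_eq hT]
  field_simp
  ring

lemma poissonArg_gradient_identity (hT : interpDenom x t a = T) (hT0 : T ≠ 0) (hx : x ≠ 0) :
    (2 * a * -2 * t / T) ^ 2 * poissonArg x t a +
        (2 / x + 2 * a * -2 * x / T) ^ 2 * poissonArg x t a =
      16 * a * (1 - a) / T ^ 2 * (1 - poissonArg x t a) := by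
  rw [poissonArg, hT, one_sub_eq_of_interpDenom_eq hT]
  field_simp
  ring

lemma poissonProfile_cross_identity (hT : interpDenom x t a = T) (hT0 : T ≠ 0) (hx : x ≠ 0)
    (ht : t ≠ 0) :
    (2 * (1 / t + 2 * a * -(lam + 1) * t / T) * (2 * a * -2 * t / T) +
        (2 * a * -2 / T + 4 * a ^ 2 * -2 * (-2 - 1) * t ^ 2 / T ^ 2)) * poissonArg x t a +
      (2 * (lam / x + 2 * a * -(lam + 1) * x / T) * (2 / x + 2 * a * -2 * x / T) +
        (2 / x ^ 2 + 2 * a * -2 * (2 * 2 + 1) / T +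
          4 * a ^ 2 * -2 * (-2 - 1) * x ^ 2 / T ^ 2)) * poissonArg x t a =
      16 * a * (1 - a) / T ^ 2 * (lam + 1 / 2 - (lam + 5 / 2) * poissonArg x t a) := by
  rw [poissonArg, hT, one_sub_eq_of_interpDenom_eq hT]
  field_simp
  ring

end ProfileIdentities

-- Writing `M` for the prefactor, `W` for the argument and `F` for the hypergeometric function, the
-- operator maps `M * F(W)` to `(LM) F + (2 ∇M·∇W + M ΔW) F' + M |∇W|² F''`; by the three
-- identities above, this is `16 a (1 - a) / T ^ 2 * M` times the hypergeometric equation at `W`.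
lemma poissonProfile_pde (hlam : 0 < lam) (hx : 0 < x) (ht : 0 < t) (ha : a ∈ Icc (0 : ℝ) 1) :
    deriv (deriv fun s => poissonProfile lam x s a) t +
      deriv (deriv fun z => poissonProfile lam z t a) x -
      lam * (lam - 1) / x ^ 2 * poissonProfile lam x t a = 0 := by
  have hT := interpDenom_pos (t := t) hx ha
  have habs := abs_poissonArg_lt_one hx ht ha
  have hF : ContDiffAt ℝ 2 (poissonHypergeometric lam) (poissonArg x t a) :=
    contDiffAt_ordinaryHypergeometric _ _ _ habs
  have ode := poissonHypergeometric_ode hlam habs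
  have htime := deriv_deriv_mul_comp_powMulQuadPow (m := 1) (n := -(lam + 1)) (A := x ^ lam) ht hT
    (quad_time_eq_interpDenom x t a) (poissonArg_eq_powMulQuadPow_time x t a).symm hF
  have hspace := deriv_deriv_mul_comp_powMulQuadPow (m := lam) (n := -(lam + 1)) (A := t) hx hT
    (quad_space_eq_interpDenom x t a) (poissonArg_eq_powMulQuadPow_space x t a).symm hF
  simp only [← poissonProfile_eq_powMulQuadPow_time] at htime
  simp only [← poissonProfile_eq_powMulQuadPow_space] at hspace
  rw [htime, hspace, powMulQuadPow, powMulQuadPow, quad_time_eq_interpDenom,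
    quad_space_eq_interpDenom, Real.rpow_one, poissonProfile]
  generalize deriv (deriv (poissonHypergeometric lam)) _ = F₂ at ode ⊢
  generalize deriv (poissonHypergeometric lam) _ = F₁ at ode ⊢
  generalize poissonHypergeometric lam _ = F₀ at ode ⊢
  generalize interpDenom x t a ^ (-(lam + 1)) = Z
  generalize x ^ lam = X
  have hT' := hT.ne'
  linear_combination t * X * Z *
    (poissonProfile_prefactor_identity (lam := lam) rfl hT' * F₀ +
      poissonProfile_cross_identity (lam := lam) rfl hT' hx.ne' ht.ne' * F₁ +
      poissonArg x t a * poissonArg_gradient_identity rfl hT' hx.ne' * F₂ +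
      16 * a * (1 - a) / interpDenom x t a ^ 2 * ode)

end PoissonProfile

/-! ### The Bessel heat kernel -/

section BesselI

variable {ν z : ℝ}

lemma besselI_term_pos (hν : -1 < ν) (hz : 0 < z) (k : ℕ) :
    0 < (z / 2) ^ (2 * (k : ℝ) + ν) / ((Nat.factorial k : ℝ) * Real.Gamma ((k : ℝ) + ν + 1)) := by
  have : (0 : ℝ) < k + ν + 1 := by linarith [k.cast_nonneg (α := ℝ)]
  have := Real.Gamma_pos_of_pos this
  positivity

lemma besselI_term_succ (hν : -1 < ν) (hz : 0 < z) (k : ℕ) :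
    (z / 2) ^ (2 * ((k + 1 : ℕ) : ℝ) + ν) /
        ((Nat.factorial (k + 1) : ℝ) * Real.Gamma (((k + 1 : ℕ) : ℝ) + ν + 1)) =
      (z / 2) ^ 2 / ((k + 1) * (k + (ν + 1))) * ((z / 2) ^ (2 * (k : ℝ) + ν) /
        ((Nat.factorial k : ℝ) * Real.Gamma ((k : ℝ) + ν + 1))) := by
  have hk : (0 : ℝ) < k + ν + 1 := by linarith [k.cast_nonneg (α := ℝ)]
  have hΓ : Real.Gamma (((k + 1 : ℕ) : ℝ) + ν + 1) = (k + ν + 1) * Real.Gamma (k + ν + 1) := by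
    rw [← Real.Gamma_add_one hk.ne']
    push_cast
    ring_nf
  have hpow : (z / 2) ^ (2 * ((k + 1 : ℕ) : ℝ) + ν) =
      (z / 2) ^ 2 * (z / 2) ^ (2 * (k : ℝ) + ν) := by
    rw [← Real.rpow_natCast, ← Real.rpow_add (by positivity)]
    push_cast
    ring_nf
  rw [hΓ, hpow, Nat.factorial_succ, ← add_assoc]
  push_cast
  field_simp

lemma hasSum_besselI (hν : -1 < ν) (hz : 0 < z) :
    HasSum (fun k : ℕ => (z / 2) ^ (2 * (k : ℝ) + ν) /
      ((Nat.factorial k : ℝ) * Real.Gamma ((k : ℝ) + ν + 1))) (besselI ν z) := by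
  refine Summable.hasSum (summable_of_ratio_test_tendsto_lt_one zero_lt_one
    (Eventually.of_forall fun k => (besselI_term_pos hν hz k).ne') ?_)
  have hatTop : Tendsto (fun k : ℕ => ((k : ℝ) + 1) * (k + (ν + 1))) atTop atTop :=
    (tendsto_atTop_add_const_right _ _ tendsto_natCast_atTop_atTop).atTop_mul_atTop₀
      (tendsto_atTop_add_const_right _ _ tendsto_natCast_atTop_atTop)
  refine (hatTop.const_div_atTop ((z / 2) ^ 2)).congr fun k => ?_
  rw [Real.norm_of_nonneg (besselI_term_pos hν hz _).le,
    Real.norm_of_nonneg (besselI_term_pos hν hz _).le, besselI_term_succ hν hz,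
    mul_div_cancel_right₀ _ (besselI_term_pos hν hz k).ne']

lemma measurable_besselI (ν : ℝ) : Measurable (besselI ν) := by
  unfold besselI
  fun_prop

end BesselI

/-- The terms of the series expansion of the Bessel heat kernel `W_s^λ(x,y)`. -/
def heatTerm (lam s x y : ℝ) (k : ℕ) : ℝ :=
  2 * (x * y) ^ (2 * k + lam) / ((Nat.factorial k : ℝ) * Real.Gamma (k + lam + 1 / 2)) *
    ((4 * s) ^ (-(2 * k + lam + 1 / 2)) * Real.exp (-(x ^ 2 + y ^ 2) / (4 * s)))

section HeatKernel

variable {lam s x y : ℝ}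

lemma heatTerm_nonneg (hlam : 0 < lam) (hs : 0 < s) (hx : 0 < x) (hy : 0 < y) (k : ℕ) :
    0 ≤ heatTerm lam s x y k := by
  have := Real.Gamma_pos_of_pos (s := k + lam + 1 / 2) (by positivity)
  unfold heatTerm
  positivity

lemma hasSum_heatTerm (hlam : 0 < lam) (hs : 0 < s) (hx : 0 < x) (hy : 0 < y) :
    HasSum (heatTerm lam s x y) (besselHeatKernel lam s x y) := by
  refine (((hasSum_besselI (ν := lam - 1 / 2) (z := x * y / (2 * s)) (by linarith)
    (by positivity)).mul_left (√(x * y) / (2 * s))).mul_right _).congr_fun fun k => ?_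
  have hΓ : (k : ℝ) + (lam - 1 / 2) + 1 = k + lam + 1 / 2 := by ring
  have hpow : √(x * y) / (2 * s) * (x * y / (2 * s) / 2) ^ (2 * (k : ℝ) + (lam - 1 / 2)) =
      2 * (x * y) ^ (2 * k + lam) * (4 * s) ^ (-(2 * k + lam + 1 / 2)) := by
    have hxy : 0 < x * y := mul_pos hx hy
    have h4s : 0 < 4 * s := by positivity
    rw [show 2 * (k : ℝ) + lam = 1 / 2 + (2 * k + (lam - 1 / 2)) by ring,
      show 1 / 2 + (2 * (k : ℝ) + (lam - 1 / 2)) + 1 / 2 = 1 + (2 * k + (lam - 1 / 2)) by ring,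
      Real.rpow_neg h4s.le, Real.rpow_add h4s, Real.rpow_one, Real.rpow_add hxy,
      ← Real.sqrt_eq_rpow, show x * y / (2 * s) / 2 = x * y / (4 * s) by ring,
      Real.div_rpow hxy.le h4s.le]
    field_simp
    norm_num
  rw [heatTerm, hΓ]
  linear_combination -hpow * Real.exp (-(x ^ 2 + y ^ 2) / (4 * s)) /
    ((Nat.factorial k : ℝ) * Real.Gamma (k + lam + 1 / 2))

lemma besselHeatKernel_nonneg (hlam : 0 < lam) (hs : 0 < s) (hx : 0 < x) (hy : 0 < y) :
    0 ≤ besselHeatKernel lam s x y :=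
  (hasSum_heatTerm hlam hs hx hy).nonneg fun k => heatTerm_nonneg hlam hs hx hy k

lemma ofReal_besselHeatKernel (hlam : 0 < lam) (hs : 0 < s) (hx : 0 < x) (hy : 0 < y) :
    ENNReal.ofReal (besselHeatKernel lam s x y) =
      ∑' k, ENNReal.ofReal (heatTerm lam s x y k) := by
  rw [← (hasSum_heatTerm hlam hs hx hy).tsum_eq, ENNReal.ofReal_tsum_of_nonneg
    (heatTerm_nonneg hlam hs hx hy) (hasSum_heatTerm hlam hs hx hy).summable]

lemma measurable_besselHeatKernel (lam x : ℝ) :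
    Measurable fun p : ℝ × ℝ => besselHeatKernel lam p.1 x p.2 := by
  have := measurable_besselI (lam - 1 / 2)
  unfold besselHeatKernel
  fun_prop

lemma measurable_heatTerm (lam x : ℝ) (k : ℕ) :
    Measurable fun p : ℝ × ℝ => heatTerm lam p.1 x p.2 k := by
  unfold heatTerm
  fun_prop

lemma lintegral_rpow_mul_exp_neg_mul_sq {b q : ℝ} (hb : 0 < b) (hq : -1 < q) :
    ∫⁻ y in Ioi (0 : ℝ), ENNReal.ofReal (y ^ q * Real.exp (-b * y ^ 2)) =
      ENNReal.ofReal (b ^ (-(q + 1) / 2) * (1 / 2) * Real.Gamma ((q + 1) / 2)) := by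
  simp only [← Real.rpow_two]
  rw [← ofReal_integral_eq_lintegral_ofReal
    (integrableOn_rpow_mul_exp_neg_mul_rpow hq two_pos hb) (ae_restrict_of_forall_mem
      measurableSet_Ioi fun y (hy : 0 < y) => by simp only [Pi.zero_apply]; positivity),
    integral_rpow_mul_exp_neg_mul_rpow two_pos hq hb]

lemma rpow_two_mul_natCast_add {z : ℝ} (hz : 0 < z) (k : ℕ) (q : ℝ) :
    z ^ (2 * (k : ℝ) + q) = (z ^ 2) ^ k * z ^ q := by
  rw [Real.rpow_add hz, Real.rpow_mul hz.le, Real.rpow_two, Real.rpow_natCast]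

lemma heatTerm_mul_rpow (hx : 0 < x) (hy : 0 < y) (k : ℕ) :
    heatTerm lam s x y k * y ^ lam =
      2 * x ^ (2 * k + lam) / ((Nat.factorial k : ℝ) * Real.Gamma (k + lam + 1 / 2)) *
        ((4 * s) ^ (-(2 * k + lam + 1 / 2)) * Real.exp (-(x ^ 2 / (4 * s)))) *
      (y ^ (2 * k + 2 * lam) * Real.exp (-(4 * s)⁻¹ * y ^ 2)) := by
  have hexp : Real.exp (-(x ^ 2 + y ^ 2) / (4 * s)) =
      Real.exp (-(x ^ 2 / (4 * s))) * Real.exp (-(4 * s)⁻¹ * y ^ 2) := by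
    rw [← Real.exp_add]
    congr 1
    ring
  rw [heatTerm, hexp, Real.mul_rpow hx.le hy.le,
    show 2 * (k : ℝ) + 2 * lam = 2 * k + lam + lam by ring, Real.rpow_add hy (2 * k + lam)]
  ring

lemma lintegral_heatTerm_mul_rpow (hlam : 0 < lam) (hs : 0 < s) (hx : 0 < x) (k : ℕ) :
    ∫⁻ y in Ioi (0 : ℝ), ENNReal.ofReal (heatTerm lam s x y k * y ^ lam) =
      ENNReal.ofReal (x ^ lam * Real.exp (-(x ^ 2 / (4 * s))) *
        ((x ^ 2 / (4 * s)) ^ k / (Nat.factorial k : ℝ))) := by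
  have hq : (-1 : ℝ) < 2 * k + 2 * lam := by linarith [k.cast_nonneg (α := ℝ)]
  have := Real.Gamma_pos_of_pos (s := k + lam + 1 / 2) (by positivity)
  have hpow : (4 * s) ^ (-(2 * k + lam + 1 / 2)) *
      (4 * s)⁻¹ ^ (-(2 * (k : ℝ) + 2 * lam + 1) / 2) = ((4 * s) ^ k)⁻¹ := by
    rw [Real.inv_rpow (by positivity), ← Real.rpow_neg (by positivity),
      ← Real.rpow_add (by positivity), ← Real.rpow_natCast, ← Real.rpow_neg (by positivity)]
    ring_nf
  rw [setLIntegral_congr_fun measurableSet_Ioi fun y hy => by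
    rw [heatTerm_mul_rpow hx hy, ENNReal.ofReal_mul (by positivity)],
    lintegral_const_mul' _ _ ENNReal.ofReal_ne_top,
    lintegral_rpow_mul_exp_neg_mul_sq (by positivity) hq, ← ENNReal.ofReal_mul (by positivity),
    show (2 * (k : ℝ) + 2 * lam + 1) / 2 = k + lam + 1 / 2 by ring,
    rpow_two_mul_natCast_add hx, div_pow, div_eq_mul_inv ((x ^ 2) ^ k), ← hpow]
  congr 1
  field_simp

lemma lintegral_besselHeatKernel_mul_rpow (hlam : 0 < lam) (hs : 0 < s) (hx : 0 < x) :
    ∫⁻ y in Ioi (0 : ℝ), ENNReal.ofReal (besselHeatKernel lam s x y * y ^ lam) =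
      ENNReal.ofReal (x ^ lam) := by
  have hexp := (NormedSpace.expSeries_div_hasSum_exp (x ^ 2 / (4 * s))).mul_left
    (x ^ lam * Real.exp (-(x ^ 2 / (4 * s))))
  rw [← Real.exp_eq_exp_ℝ, mul_assoc, ← Real.exp_add, neg_add_cancel, Real.exp_zero,
    mul_one] at hexp
  calc ∫⁻ y in Ioi (0 : ℝ), ENNReal.ofReal (besselHeatKernel lam s x y * y ^ lam)
      = ∫⁻ y in Ioi (0 : ℝ), ∑' k, ENNReal.ofReal (heatTerm lam s x y k * y ^ lam) := by
        refine setLIntegral_congr_fun measurableSet_Ioi fun y (hy : 0 < y) => ?_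
        simp only [ENNReal.ofReal_mul' (Real.rpow_nonneg hy.le lam),
          ofReal_besselHeatKernel hlam hs hx hy, ENNReal.tsum_mul_right]
    _ = ∑' k, ∫⁻ y in Ioi (0 : ℝ), ENNReal.ofReal (heatTerm lam s x y k * y ^ lam) := by
        refine lintegral_tsum fun k => Measurable.aemeasurable ?_
        have := (measurable_heatTerm lam x k).comp (measurable_prodMk_left (x := s))
        exact (this.mul (by fun_prop)).ennreal_ofReal
    _ = ENNReal.ofReal (x ^ lam) := by
        simp only [lintegral_heatTerm_mul_rpow hlam hs hx]
        rw [← ENNReal.ofReal_tsum_of_nonneg (fun k => by positivity) hexp.summable, hexp.tsum_eq]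

end HeatKernel

/-! ### Subordination and the closed form of the Bessel–Poisson kernel -/

section InverseGamma

variable {m A : ℝ}

lemma rpow_mul_exp_neg_mul_comp_inv {s : ℝ} (hs : 0 < s) :
    (|(-1 : ℝ)| * s ^ ((-1 : ℝ) - 1)) •
        ((s ^ (-1 : ℝ)) ^ (m - 1) * Real.exp (-(A * s ^ (-1 : ℝ)))) =
      s ^ (-(m + 1)) * Real.exp (-(A / s)) := by
  rw [← Real.rpow_mul hs.le, abs_neg, abs_one, one_mul, smul_eq_mul, ← mul_assoc,
    ← Real.rpow_add hs, Real.rpow_neg_one, ← div_eq_mul_inv]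
  ring_nf

lemma integrableOn_rpow_mul_exp_neg_div (hm : 0 < m) (hA : 0 < A) :
    IntegrableOn (fun s => s ^ (-(m + 1)) * Real.exp (-(A / s))) (Ioi 0) := by
  have h : IntegrableOn (fun u : ℝ => u ^ (m - 1) * Real.exp (-(A * u))) (Ioi 0) := by
    simpa [neg_mul] using
      integrableOn_rpow_mul_exp_neg_mul_rpow (p := 1) (s := m - 1) (by linarith) one_pos hA
  rw [← integrableOn_Ioi_comp_rpow_iff _ (p := -1) (by norm_num)] at h
  exact h.congr_fun (fun s hs => rpow_mul_exp_neg_mul_comp_inv hs) measurableSet_Ioi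

lemma integral_rpow_mul_exp_neg_div (hm : 0 < m) (hA : 0 < A) :
    ∫ s in Ioi (0 : ℝ), s ^ (-(m + 1)) * Real.exp (-(A / s)) = A ^ (-m) * Real.Gamma m := by
  rw [Real.rpow_neg hA.le, ← Real.inv_rpow hA.le, ← one_div,
    ← Real.integral_rpow_mul_exp_neg_mul_Ioi hm hA,
    ← integral_comp_rpow_Ioi (fun u : ℝ => u ^ (m - 1) * Real.exp (-(A * u))) (p := -1)
      (by norm_num)]
  exact setIntegral_congr_fun measurableSet_Ioi fun s hs => (rpow_mul_exp_neg_mul_comp_inv hs).symm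

lemma lintegral_rpow_mul_exp_neg_div (hm : 0 < m) (hA : 0 < A) :
    ∫⁻ s in Ioi (0 : ℝ), ENNReal.ofReal (s ^ (-(m + 1)) * Real.exp (-(A / s))) =
      ENNReal.ofReal (A ^ (-m) * Real.Gamma m) := by
  rw [← integral_rpow_mul_exp_neg_div hm hA, ofReal_integral_eq_lintegral_ofReal
    (integrableOn_rpow_mul_exp_neg_div hm hA) (ae_restrict_of_forall_mem measurableSet_Ioi
      fun s (hs : 0 < s) => by simp only [Pi.zero_apply]; positivity)]

end InverseGamma

/-- The density in `s` that subordinates the Poisson semigroup at time `t` to the heat semigroup at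
time `s`. -/
def poissonSubordinator (t s : ℝ) : ℝ :=
  t / (2 * √π) * (s ^ (-(3 : ℝ) / 2) * Real.exp (-t ^ 2 / (4 * s)))

section Subordination

variable {lam s t x y : ℝ}

lemma poissonSubordinator_nonneg (ht : 0 < t) (hs : 0 < s) : 0 ≤ poissonSubordinator t s := by
  unfold poissonSubordinator
  positivity

lemma measurable_poissonSubordinator (t : ℝ) : Measurable (poissonSubordinator t) := by
  unfold poissonSubordinator
  fun_prop

lemma lintegral_poissonSubordinator (ht : 0 < t) :
    ∫⁻ s in Ioi (0 : ℝ), ENNReal.ofReal (poissonSubordinator t s) = 1 := by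
  have h (s : ℝ) : poissonSubordinator t s =
      t / (2 * √π) * (s ^ (-((1 / 2 : ℝ) + 1)) * Real.exp (-(t ^ 2 / 4 / s))) := by
    rw [poissonSubordinator, neg_div _ (t ^ 2), div_div]
    norm_num
  have hpow : (t ^ 2 / 4) ^ (-(1 / 2) : ℝ) = 2 / t := by
    rw [Real.rpow_neg (by positivity), ← Real.sqrt_eq_rpow,
      show t ^ 2 / 4 = (t / 2) ^ 2 by ring, Real.sqrt_sq (by positivity), inv_div]
  simp only [h, ENNReal.ofReal_mul (show 0 ≤ t / (2 * √π) by positivity)]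
  rw [lintegral_const_mul' _ _ ENNReal.ofReal_ne_top,
    lintegral_rpow_mul_exp_neg_div (by norm_num) (by positivity),
    ← ENNReal.ofReal_mul (by positivity), hpow, Real.Gamma_one_half_eq, ← ENNReal.ofReal_one]
  congr 1
  field_simp

lemma Gamma_two_mul_add_add_one_div (hlam : 0 < lam) (k : ℕ) :
    Real.Gamma (2 * k + lam + 1) / ((Nat.factorial k : ℝ) * Real.Gamma (k + lam + 1 / 2)) =
      Real.Gamma (lam + 1) / Real.Gamma (lam + 1 / 2) * (4 ^ k *
        ordinaryHypergeometricCoefficient ((lam + 1) / 2) ((lam + 2) / 2) (lam + 1 / 2) k) := by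
  induction k with
  | zero => simp [ordinaryHypergeometricCoefficient]
  | succ k ih =>
    have hnum : Real.Gamma (2 * (k + 1 : ℕ) + lam + 1) =
        (2 * k + lam + 2) * ((2 * k + lam + 1) * Real.Gamma (2 * k + lam + 1)) := by
      rw [← Real.Gamma_add_one (by positivity), add_right_comm _ _ 2,
        show 2 * (k : ℝ) + 2 + lam = 2 * k + lam + 1 + 1 by ring,
        ← Real.Gamma_add_one (by positivity)]
      push_cast
      ring_nf
    have hden : Real.Gamma ((k + 1 : ℕ) + lam + 1 / 2) =
        (k + lam + 1 / 2) * Real.Gamma (k + lam + 1 / 2) := by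
      rw [← Real.Gamma_add_one (by positivity)]
      push_cast
      ring_nf
    have hrec := ordinaryHypergeometricCoefficient_recurrence (a := (lam + 1) / 2)
      (b := (lam + 2) / 2) (c := lam + 1 / 2) (n := k) (by positivity)
    rw [hnum, hden, Nat.factorial_succ]
    push_cast
    calc (2 * k + lam + 2) * ((2 * k + lam + 1) * Real.Gamma (2 * k + lam + 1)) /
          ((k + 1) * Nat.factorial k * ((k + lam + 1 / 2) * Real.Gamma (k + lam + 1 / 2)))
        = (2 * k + lam + 2) * (2 * k + lam + 1) / ((k + 1) * (k + lam + 1 / 2)) *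
            (Real.Gamma (2 * k + lam + 1) /
              ((Nat.factorial k : ℝ) * Real.Gamma (k + lam + 1 / 2))) := by
          field_simp
      _ = _ := by
          rw [ih, div_mul_eq_mul_div, div_eq_iff (by positivity)]
          linear_combination -Real.Gamma (lam + 1) / Real.Gamma (lam + 1 / 2) * 4 ^ (k + 1) * hrec

/-- The normalizing constant in the closed form of the Bessel–Poisson kernel. -/
def poissonConst (lam : ℝ) : ℝ :=
  2 * Real.Gamma (lam + 1) / (√π * Real.Gamma (lam + 1 / 2))

lemma poissonConst_pos (hlam : 0 < lam) : 0 < poissonConst lam := by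
  have := Real.Gamma_pos_of_pos (s := lam + 1) (by positivity)
  have := Real.Gamma_pos_of_pos (s := lam + 1 / 2) (by positivity)
  unfold poissonConst
  positivity

lemma poissonSubordinator_mul_heatTerm (hs : 0 < s) (k : ℕ) :
    poissonSubordinator t s * heatTerm lam s x y k =
      t / √π * (x * y) ^ (2 * k + lam) / ((Nat.factorial k : ℝ) * Real.Gamma (k + lam + 1 / 2)) *
        4 ^ (-(2 * k + lam + 1 / 2)) *
      (s ^ (-(2 * k + lam + 1 + 1)) * Real.exp (-((x ^ 2 + y ^ 2 + t ^ 2) / 4 / s))) := by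
  have hexp : Real.exp (-((x ^ 2 + y ^ 2 + t ^ 2) / 4 / s)) =
      Real.exp (-(x ^ 2 + y ^ 2) / (4 * s)) * Real.exp (-t ^ 2 / (4 * s)) := by
    rw [← Real.exp_add]
    congr 1
    ring
  have hpow : s ^ (-(2 * k + lam + 1 + 1)) =
      s ^ (-(2 * k + lam + 1 / 2)) * s ^ (-(3 : ℝ) / 2) := by
    rw [← Real.rpow_add hs]
    ring_nf
  rw [poissonSubordinator, heatTerm, hexp, hpow, Real.mul_rpow (by norm_num) hs.le]
  ring

lemma four_rpow_mul_div_four_rpow {S : ℝ} (hS : 0 ≤ S) (q : ℝ) :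
    (4 : ℝ) ^ (-(q + 1 / 2)) * (S / 4) ^ (-(q + 1)) = 2 * S ^ (-(q + 1)) := by
  rw [Real.div_rpow hS (by norm_num), mul_div_assoc', mul_comm, mul_div_assoc,
    ← Real.rpow_sub (by norm_num), show -(q + 1 / 2) - -(q + 1) = 1 / 2 by ring,
    ← Real.sqrt_eq_rpow, show (4 : ℝ) = 2 ^ 2 by norm_num, Real.sqrt_sq (by norm_num), mul_comm]

lemma lintegral_poissonSubordinator_mul_heatTerm (hlam : 0 < lam) (ht : 0 < t) (hx : 0 < x)
    (hy : 0 < y) (k : ℕ) :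
    ∫⁻ s in Ioi (0 : ℝ), ENNReal.ofReal (poissonSubordinator t s * heatTerm lam s x y k) =
      ENNReal.ofReal (poissonConst lam *
        (t * (x * y) ^ lam * (x ^ 2 + y ^ 2 + t ^ 2) ^ (-(lam + 1))) *
        (ordinaryHypergeometricCoefficient ((lam + 1) / 2) ((lam + 2) / 2) (lam + 1 / 2) k *
          ((2 * (x * y) / (x ^ 2 + y ^ 2 + t ^ 2)) ^ 2) ^ k)) := by
  have := Real.Gamma_pos_of_pos (s := k + lam + 1 / 2) (by positivity)
  rw [setLIntegral_congr_fun measurableSet_Ioi fun s hs => by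
    rw [poissonSubordinator_mul_heatTerm hs, ENNReal.ofReal_mul (by positivity)],
    lintegral_const_mul' _ _ ENNReal.ofReal_ne_top,
    lintegral_rpow_mul_exp_neg_div (by positivity) (by positivity),
    ← ENNReal.ofReal_mul (by positivity)]
  congr 1
  have hS : 0 < x ^ 2 + y ^ 2 + t ^ 2 := by positivity
  have hxy : 0 < x * y := mul_pos hx hy
  generalize x ^ 2 + y ^ 2 + t ^ 2 = S at hS ⊢
  generalize x * y = z at hxy ⊢
  have hSk : S ^ (-(2 * (k : ℝ) + lam + 1)) = ((S ^ 2) ^ k)⁻¹ * S ^ (-(lam + 1)) := by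
    rw [add_assoc, Real.rpow_neg hS.le, rpow_two_mul_natCast_add hS, mul_inv, Real.rpow_neg hS.le]
  calc t / √π * z ^ (2 * (k : ℝ) + lam) /
          ((Nat.factorial k : ℝ) * Real.Gamma (k + lam + 1 / 2)) *
        4 ^ (-(2 * k + lam + 1 / 2)) * ((S / 4) ^ (-(2 * k + lam + 1)) *
          Real.Gamma (2 * k + lam + 1))
      = t / √π * z ^ (2 * (k : ℝ) + lam) *
          (Real.Gamma (2 * k + lam + 1) /
            ((Nat.factorial k : ℝ) * Real.Gamma (k + lam + 1 / 2))) *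
          (4 ^ (-(2 * k + lam + 1 / 2)) * (S / 4) ^ (-(2 * k + lam + 1))) := by ring
    _ = _ := by
      rw [Gamma_two_mul_add_add_one_div hlam, four_rpow_mul_div_four_rpow hS.le,
        rpow_two_mul_natCast_add hxy, hSk, poissonConst, div_pow, div_pow, mul_pow 2 z, mul_pow,
        show (2 : ℝ) ^ 2 = 4 by norm_num]
      field_simp

lemma interpDenom_inv_one_add_sq (x t y : ℝ) :
    interpDenom x t (1 + y ^ 2)⁻¹ = (x ^ 2 + y ^ 2 + t ^ 2) / (1 + y ^ 2) := by
  have : 0 < 1 + y ^ 2 := by positivity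
  unfold interpDenom
  field_simp
  ring

lemma poissonArg_inv_one_add_sq (x t y : ℝ) :
    poissonArg x t (1 + y ^ 2)⁻¹ = (2 * (x * y) / (x ^ 2 + y ^ 2 + t ^ 2)) ^ 2 := by
  have : 0 < 1 + y ^ 2 := by positivity
  have ha : 1 - (1 + y ^ 2)⁻¹ = y ^ 2 / (1 + y ^ 2) := by
    field_simp
    ring
  rw [poissonArg, interpDenom_inv_one_add_sq, ha, div_pow, div_div_eq_mul_div, div_pow]
  field_simp
  ring

lemma inv_one_add_sq_mem_Icc (y : ℝ) : (1 + y ^ 2)⁻¹ ∈ Icc (0 : ℝ) 1 :=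
  ⟨by positivity, inv_le_one_of_one_le₀ (by linarith [sq_nonneg y])⟩

lemma lintegral_poissonSubordinator_mul_besselHeatKernel (hlam : 0 < lam) (ht : 0 < t)
    (hx : 0 < x) (hy : 0 < y) :
    ∫⁻ s in Ioi (0 : ℝ), ENNReal.ofReal (poissonSubordinator t s * besselHeatKernel lam s x y) =
      ENNReal.ofReal (poissonConst lam *
        (t * (x * y) ^ lam * (x ^ 2 + y ^ 2 + t ^ 2) ^ (-(lam + 1))) *
        poissonHypergeometric lam (poissonArg x t (1 + y ^ 2)⁻¹)) := by
  have hK := poissonConst_pos hlam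
  have hF := (hasSum_ordinaryHypergeometric ((lam + 1) / 2) ((lam + 2) / 2) (lam + 1 / 2)
    (abs_poissonArg_lt_one hx ht (inv_one_add_sq_mem_Icc y))).mul_left (poissonConst lam *
      (t * (x * y) ^ lam * (x ^ 2 + y ^ 2 + t ^ 2) ^ (-(lam + 1))))
  have hA (k : ℕ) := ordinaryHypergeometricCoefficient_pos (a := (lam + 1) / 2)
    (b := (lam + 2) / 2) (c := lam + 1 / 2) (by positivity) (by positivity) (by positivity) k
  calc ∫⁻ s in Ioi (0 : ℝ), ENNReal.ofReal (poissonSubordinator t s * besselHeatKernel lam s x y)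
      = ∫⁻ s in Ioi (0 : ℝ), ∑' k,
          ENNReal.ofReal (poissonSubordinator t s * heatTerm lam s x y k) := by
        refine setLIntegral_congr_fun measurableSet_Ioi fun s (hs : 0 < s) => ?_
        simp only [ENNReal.ofReal_mul (poissonSubordinator_nonneg ht hs),
          ofReal_besselHeatKernel hlam hs hx hy, ENNReal.tsum_mul_left]
    _ = ∑' k, ∫⁻ s in Ioi (0 : ℝ),
          ENNReal.ofReal (poissonSubordinator t s * heatTerm lam s x y k) :=
        lintegral_tsum fun k => ((measurable_poissonSubordinator t).mul
          ((measurable_heatTerm lam x k).comp measurable_prodMk_right)).ennreal_ofReal.aemeasurable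
    _ = _ := by
        simp only [lintegral_poissonSubordinator_mul_heatTerm hlam ht hx hy,
          ← poissonArg_inv_one_add_sq]
        rw [← ENNReal.ofReal_tsum_of_nonneg _ hF.summable, hF.tsum_eq, poissonHypergeometric]
        intro k
        have := hA k
        have := poissonArg_nonneg (x := x) (t := t) (inv_one_add_sq_mem_Icc y)
        positivity

lemma besselPoissonKernel_eq_integral (lam t x y : ℝ) :
    besselPoissonKernel lam t x y =
      ∫ s in Ioi (0 : ℝ), poissonSubordinator t s * besselHeatKernel lam s x y := by
  simp only [besselPoissonKernel, poissonSubordinator, mul_assoc, integral_const_mul]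

lemma besselPoissonKernel_nonneg (hlam : 0 < lam) (ht : 0 < t) (hx : 0 < x) (hy : 0 < y) :
    0 ≤ besselPoissonKernel lam t x y := by
  rw [besselPoissonKernel_eq_integral]
  exact setIntegral_nonneg measurableSet_Ioi fun s hs =>
    mul_nonneg (poissonSubordinator_nonneg ht hs) (besselHeatKernel_nonneg hlam hs hx hy)

lemma besselPoissonKernel_eq (hlam : 0 < lam) (ht : 0 < t) (hx : 0 < x) (hy : 0 < y) :
    besselPoissonKernel lam t x y = poissonConst lam *
      (t * (x * y) ^ lam * (x ^ 2 + y ^ 2 + t ^ 2) ^ (-(lam + 1))) *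
      poissonHypergeometric lam (poissonArg x t (1 + y ^ 2)⁻¹) := by
  have hK := poissonConst_pos hlam
  have hF := poissonHypergeometric_nonneg hlam (poissonArg_nonneg (inv_one_add_sq_mem_Icc y))
    (poissonArg_lt_one hx ht (inv_one_add_sq_mem_Icc y))
  have hmeas : Measurable fun s => poissonSubordinator t s * besselHeatKernel lam s x y :=
    (measurable_poissonSubordinator t).mul
      ((measurable_besselHeatKernel lam x).comp measurable_prodMk_right)
  rw [besselPoissonKernel_eq_integral, integral_eq_lintegral_of_nonneg_ae
    (ae_restrict_of_forall_mem measurableSet_Ioi fun s hs => mul_nonneg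
      (poissonSubordinator_nonneg ht hs) (besselHeatKernel_nonneg hlam hs hx hy))
    hmeas.aestronglyMeasurable, lintegral_poissonSubordinator_mul_besselHeatKernel hlam ht hx hy,
    ENNReal.toReal_ofReal (by positivity)]

lemma ofReal_besselPoissonKernel (hlam : 0 < lam) (ht : 0 < t) (hx : 0 < x) (hy : 0 < y) :
    ENNReal.ofReal (besselPoissonKernel lam t x y) = ∫⁻ s in Ioi (0 : ℝ),
      ENNReal.ofReal (poissonSubordinator t s * besselHeatKernel lam s x y) := by
  rw [besselPoissonKernel_eq hlam ht hx hy,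
    lintegral_poissonSubordinator_mul_besselHeatKernel hlam ht hx hy]

lemma lintegral_besselPoissonKernel_mul_rpow (hlam : 0 < lam) (ht : 0 < t) (hx : 0 < x) :
    ∫⁻ y in Ioi (0 : ℝ), ENNReal.ofReal (besselPoissonKernel lam t x y * y ^ lam) =
      ENNReal.ofReal (x ^ lam) := by
  have hmeas : Measurable fun p : ℝ × ℝ => ENNReal.ofReal (poissonSubordinator t p.2) *
      ENNReal.ofReal (besselHeatKernel lam p.2 x p.1 * p.1 ^ lam) :=
    ((measurable_poissonSubordinator t).comp measurable_snd).ennreal_ofReal.mul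
      ((((measurable_besselHeatKernel lam x).comp measurable_swap).mul
        (by fun_prop : Measurable fun p : ℝ × ℝ => p.1 ^ lam)).ennreal_ofReal)
  calc ∫⁻ y in Ioi (0 : ℝ), ENNReal.ofReal (besselPoissonKernel lam t x y * y ^ lam)
      = ∫⁻ y in Ioi (0 : ℝ), ∫⁻ s in Ioi (0 : ℝ), ENNReal.ofReal (poissonSubordinator t s) *
          ENNReal.ofReal (besselHeatKernel lam s x y * y ^ lam) := by
        refine setLIntegral_congr_fun measurableSet_Ioi fun y (hy : 0 < y) => ?_
        rw [ENNReal.ofReal_mul' (Real.rpow_nonneg hy.le lam),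
          ofReal_besselPoissonKernel hlam ht hx hy,
          ← lintegral_mul_const' _ _ ENNReal.ofReal_ne_top]
        refine setLIntegral_congr_fun measurableSet_Ioi fun s hs => ?_
        rw [ENNReal.ofReal_mul (poissonSubordinator_nonneg ht hs),
          ENNReal.ofReal_mul' (Real.rpow_nonneg hy.le lam), mul_assoc]
    _ = ∫⁻ s in Ioi (0 : ℝ), ∫⁻ y in Ioi (0 : ℝ), ENNReal.ofReal (poissonSubordinator t s) *
          ENNReal.ofReal (besselHeatKernel lam s x y * y ^ lam) :=
        lintegral_lintegral_swap hmeas.aemeasurable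
    _ = ∫⁻ s in Ioi (0 : ℝ), ENNReal.ofReal (poissonSubordinator t s) *
          ENNReal.ofReal (x ^ lam) :=
        setLIntegral_congr_fun measurableSet_Ioi fun s hs => by
          rw [lintegral_const_mul' _ _ ENNReal.ofReal_ne_top,
            lintegral_besselHeatKernel_mul_rpow hlam hs hx]
    _ = ENNReal.ofReal (x ^ lam) := by
        rw [lintegral_mul_const' _ _ ENNReal.ofReal_ne_top, lintegral_poissonSubordinator ht,
          one_mul]

end Subordination

/-! ### The harmonic extension -/

/-- The factor of the Bessel–Poisson kernel depending only on `y`. -/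
def poissonWeight (lam y : ℝ) : ℝ := poissonConst lam * (y ^ lam / (1 + y ^ 2) ^ (lam + 1))

section PoissonKernel

variable {lam t x y : ℝ} {u : ℝ → ℝ}

lemma poissonWeight_nonneg (hlam : 0 < lam) (hy : 0 < y) : 0 ≤ poissonWeight lam y := by
  have := poissonConst_pos hlam
  unfold poissonWeight
  positivity

lemma measurable_poissonWeight (lam : ℝ) : Measurable (poissonWeight lam) := by
  unfold poissonWeight
  fun_prop

lemma besselPoissonKernel_eq_poissonWeight_mul (hlam : 0 < lam) (ht : 0 < t) (hx : 0 < x)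
    (hy : 0 < y) : besselPoissonKernel lam t x y =
      poissonWeight lam y * poissonProfile lam x t (1 + y ^ 2)⁻¹ := by
  rw [besselPoissonKernel_eq hlam ht hx hy, poissonWeight, poissonProfile,
    interpDenom_inv_one_add_sq, Real.div_rpow (by positivity) (by positivity),
    Real.mul_rpow hx.le hy.le, Real.rpow_neg (x := 1 + y ^ 2) (by positivity)]
  field_simp

lemma setIntegral_besselPoissonKernel_mul (hlam : 0 < lam) (ht : 0 < t) (hx : 0 < x) :
    ∫ y in Ioi (0 : ℝ), besselPoissonKernel lam t x y * u y = ∫ y in Ioi (0 : ℝ),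
      (poissonWeight lam y * u y) • poissonProfile lam x t (1 + y ^ 2)⁻¹ :=
  setIntegral_congr_fun measurableSet_Ioi fun y hy => by
    rw [besselPoissonKernel_eq_poissonWeight_mul hlam ht hx hy, smul_eq_mul, mul_right_comm]

lemma continuousOn_poissonProfile (ht : 0 < t) (hx : 0 < x) :
    ContinuousOn (poissonProfile lam x t) (Icc 0 1) :=
  continuousOn_of_contDiffAt_uncurry (R := fun p : ℝ × ℝ => poissonProfile lam p.1 p.2)
    (p := (x, t)) (n := 0) fun _ ha => contDiffAt_poissonProfile hx ht ha

lemma integrableOn_poissonWeight_smul_poissonProfile (ht : 0 < t) (hx : 0 < x)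
    (hu : IntegrableOn (fun y => poissonWeight lam y * u y) (Ioi 0)) :
    IntegrableOn (fun y => (poissonWeight lam y * u y) • poissonProfile lam x t (1 + y ^ 2)⁻¹)
      (Ioi 0) :=
  integrable_smul_comp_of_isCompact isCompact_Icc (continuousOn_poissonProfile ht hx)
    (by fun_prop) inv_one_add_sq_mem_Icc hu

lemma integrableOn_besselPoissonKernel_mul (hlam : 0 < lam) (ht : 0 < t) (hx : 0 < x)
    (hu : IntegrableOn (fun y => poissonWeight lam y * u y) (Ioi 0)) :
    IntegrableOn (fun y => besselPoissonKernel lam t x y * u y) (Ioi 0) :=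
  (integrableOn_poissonWeight_smul_poissonProfile ht hx hu).congr_fun
    (fun y (hy : 0 < y) => by
      simp only [besselPoissonKernel_eq_poissonWeight_mul hlam ht hx hy, smul_eq_mul]
      ring) measurableSet_Ioi

lemma contDiffOn_poissonSemigroup (hlam : 0 < lam)
    (hu : IntegrableOn (fun y => poissonWeight lam y * u y) (Ioi 0)) :
    ContDiffOn ℝ (⊤ : ℕ∞) (fun p : ℝ × ℝ => poissonSemigroup lam u p.2 p.1)
      (Ioi (0 : ℝ) ×ˢ Ioi (0 : ℝ)) := by
  refine ContDiffOn.congr (fun p hp => ContDiffAt.contDiffWithinAt (contDiffAt_infty.2 fun n => ?_))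
    fun p hp => setIntegral_besselPoissonKernel_mul hlam hp.2 hp.1
  exact contDiffAt_integral_smul_of_isCompact isCompact_Icc
    (fun a ha => contDiffAt_poissonProfile hp.1 hp.2 ha) (by fun_prop) inv_one_add_sq_mem_Icc hu

lemma contDiffAt_uncurry_poissonProfile_time (hx : 0 < x) (ht : 0 < t) {a : ℝ}
    (ha : a ∈ Icc (0 : ℝ) 1) :
    ContDiffAt ℝ 2 (Function.uncurry fun s a => poissonProfile lam x s a) (t, a) :=
  (contDiffAt_poissonProfile hx ht ha).comp (f := fun z : ℝ × ℝ => ((x, z.1), z.2)) (t, a)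
    (by fun_prop)

lemma contDiffAt_uncurry_poissonProfile_space (hx : 0 < x) (ht : 0 < t) {a : ℝ}
    (ha : a ∈ Icc (0 : ℝ) 1) :
    ContDiffAt ℝ 2 (Function.uncurry fun z a => poissonProfile lam z t a) (x, a) :=
  (contDiffAt_poissonProfile hx ht ha).comp (f := fun z : ℝ × ℝ => ((z.1, t), z.2)) (x, a)
    (by fun_prop)

lemma deriv_deriv_poissonSemigroup_time (hlam : 0 < lam) (ht : 0 < t) (hx : 0 < x)
    (hu : IntegrableOn (fun y => poissonWeight lam y * u y) (Ioi 0)) :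
    deriv (deriv fun s => poissonSemigroup lam u s x) t = ∫ y in Ioi (0 : ℝ),
      (poissonWeight lam y * u y) •
        deriv (deriv fun s => poissonProfile lam x s (1 + y ^ 2)⁻¹) t := by
  have heq : (fun s => poissonSemigroup lam u s x) =ᶠ[nhds t] fun s => ∫ y in Ioi (0 : ℝ),
      (poissonWeight lam y * u y) • poissonProfile lam x s (1 + y ^ 2)⁻¹ := by
    filter_upwards [lt_mem_nhds ht] with s hs using setIntegral_besselPoissonKernel_mul hlam hs hx
  rw [heq.deriv.deriv_eq]
  exact deriv_deriv_integral_smul_of_isCompact isCompact_Icc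
    (fun a ha => contDiffAt_uncurry_poissonProfile_time hx ht ha) (by fun_prop)
    inv_one_add_sq_mem_Icc hu

lemma deriv_deriv_poissonSemigroup_space (hlam : 0 < lam) (ht : 0 < t) (hx : 0 < x)
    (hu : IntegrableOn (fun y => poissonWeight lam y * u y) (Ioi 0)) :
    deriv (deriv fun z => poissonSemigroup lam u t z) x = ∫ y in Ioi (0 : ℝ),
      (poissonWeight lam y * u y) •
        deriv (deriv fun z => poissonProfile lam z t (1 + y ^ 2)⁻¹) x := by
  have heq : (fun z => poissonSemigroup lam u t z) =ᶠ[nhds x] fun z => ∫ y in Ioi (0 : ℝ),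
      (poissonWeight lam y * u y) • poissonProfile lam z t (1 + y ^ 2)⁻¹ := by
    filter_upwards [lt_mem_nhds hx] with z hz using setIntegral_besselPoissonKernel_mul hlam ht hz
  rw [heq.deriv.deriv_eq]
  exact deriv_deriv_integral_smul_of_isCompact isCompact_Icc
    (fun a ha => contDiffAt_uncurry_poissonProfile_space hx ht ha) (by fun_prop)
    inv_one_add_sq_mem_Icc hu

lemma poissonSemigroup_pde (hlam : 0 < lam) (ht : 0 < t) (hx : 0 < x)
    (hu : IntegrableOn (fun y => poissonWeight lam y * u y) (Ioi 0)) :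
    deriv (deriv fun s => poissonSemigroup lam u s x) t +
      deriv (deriv fun z => poissonSemigroup lam u t z) x -
      lam * (lam - 1) / x ^ 2 * poissonSemigroup lam u t x = 0 := by
  have ha : Measurable fun y : ℝ => (1 + y ^ 2)⁻¹ := by fun_prop
  have hIt := integrable_smul_deriv_deriv_of_isCompact (R := fun s a => poissonProfile lam x s a)
    isCompact_Icc (fun a ha => contDiffAt_uncurry_poissonProfile_time hx ht ha) ha
    inv_one_add_sq_mem_Icc hu
  have hIx := integrable_smul_deriv_deriv_of_isCompact (R := fun z a => poissonProfile lam z t a)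
    isCompact_Icc (fun a ha => contDiffAt_uncurry_poissonProfile_space hx ht ha) ha
    inv_one_add_sq_mem_Icc hu
  have hI := (integrableOn_poissonWeight_smul_poissonProfile ht hx hu).const_mul
    (lam * (lam - 1) / x ^ 2)
  rw [deriv_deriv_poissonSemigroup_time hlam ht hx hu,
    deriv_deriv_poissonSemigroup_space hlam ht hx hu, poissonSemigroup,
    setIntegral_besselPoissonKernel_mul hlam ht hx, ← integral_const_mul,
    ← integral_add hIt hIx, ← integral_sub (by exact hIt.add hIx) hI]
  refine integral_eq_zero_of_ae (Eventually.of_forall fun y => ?_)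
  simp only [Pi.zero_apply, smul_eq_mul]
  linear_combination poissonWeight lam y * u y *
    poissonProfile_pde hlam hx ht (inv_one_add_sq_mem_Icc y)

end PoissonKernel

section BoundaryValues

variable {lam t x y : ℝ} {u : ℝ → ℝ}

lemma poissonArg_le_of_le_abs_sub {δ : ℝ} (hx : 0 < x) (hy : 0 < y) (hδ : 0 < δ)
    (hxy : δ ≤ |y - x|) :
    poissonArg x t (1 + y ^ 2)⁻¹ ≤ (1 - (δ / (2 * x + δ)) ^ 2) ^ 2 := by
  have hq : δ / (2 * x + δ) * (x + y) ≤ |y - x| := by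
    rw [div_mul_eq_mul_div, div_le_iff₀ (by positivity)]
    nlinarith [le_abs_self (y - x)]
  have hq0 : 0 ≤ δ / (2 * x + δ) := by positivity
  have hq1 : (δ / (2 * x + δ)) ^ 2 ≤ 1 :=
    pow_le_one₀ hq0 ((div_le_one (by positivity)).2 (by linarith))
  have hq2 : (δ / (2 * x + δ)) ^ 2 * (x + y) ^ 2 ≤ (y - x) ^ 2 := by
    rw [← mul_pow, ← sq_abs (y - x)]
    gcongr
  rw [poissonArg_inv_one_add_sq]
  gcongr
  rw [div_le_iff₀ (by positivity)]
  have hxy0 : 0 < x * y := mul_pos hx hy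
  nlinarith [mul_nonneg (sub_nonneg.2 hq1) (sq_nonneg t), sq_nonneg (x + y),
    mul_nonneg (sq_nonneg (δ / (2 * x + δ))) hxy0.le]

lemma min_sq_one_le_interpDenom {a : ℝ} (ha : a ∈ Icc (0 : ℝ) 1) :
    min (x ^ 2) 1 ≤ interpDenom x t a := by
  calc min (x ^ 2) 1 = a * min (x ^ 2) 1 + (1 - a) * min (x ^ 2) 1 := by ring
    _ ≤ a * (x ^ 2 + t ^ 2) + (1 - a) * 1 := by
      gcongr
      · exact ha.1
      · exact (min_le_left _ _).trans (le_add_of_nonneg_right (sq_nonneg t))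
      · exact sub_nonneg.2 ha.2
      · exact min_le_right _ _
    _ = interpDenom x t a := by rw [interpDenom, mul_one]

lemma poissonProfile_nonneg (hlam : 0 < lam) (hx : 0 < x) (ht : 0 < t) {a : ℝ}
    (ha : a ∈ Icc (0 : ℝ) 1) : 0 ≤ poissonProfile lam x t a := by
  have := interpDenom_pos (t := t) hx ha
  have := poissonHypergeometric_nonneg hlam (poissonArg_nonneg ha) (poissonArg_lt_one hx ht ha)
  unfold poissonProfile
  positivity

lemma poissonProfile_le (hlam : 0 < lam) (hx : 0 < x) (ht : 0 < t) {a θ : ℝ}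
    (ha : a ∈ Icc (0 : ℝ) 1) (hθ : poissonArg x t a ≤ θ) (hθ1 : θ < 1) :
    poissonProfile lam x t a ≤
      t * (x ^ lam * min (x ^ 2) 1 ^ (-(lam + 1)) * poissonHypergeometric lam θ) := by
  have hW := poissonArg_nonneg (x := x) (t := t) ha
  have hpow : interpDenom x t a ^ (-(lam + 1)) ≤ min (x ^ 2) 1 ^ (-(lam + 1)) :=
    Real.rpow_le_rpow_of_nonpos (by positivity) (min_sq_one_le_interpDenom ha) (by linarith)
  have hF : poissonHypergeometric lam (poissonArg x t a) ≤ poissonHypergeometric lam θ :=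
    monotoneOn_ordinaryHypergeometric (by positivity) (by positivity) (by positivity)
      ⟨hW, hθ.trans_lt hθ1⟩ ⟨hW.trans hθ, hθ1⟩ hθ
  have hF0 := poissonHypergeometric_nonneg hlam hW (hθ.trans_lt hθ1)
  rw [poissonProfile, mul_assoc, mul_assoc, mul_assoc]
  gcongr

lemma tendstoUniformlyOn_poissonProfile (hlam : 0 < lam) (hx : 0 < x) {U : Set ℝ}
    (hU : U ∈ nhds x) :
    TendstoUniformlyOn (fun t y => poissonProfile lam x t (1 + y ^ 2)⁻¹) 0
      (nhdsWithin 0 (Ioi 0)) (Ioi 0 \ U) := by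
  obtain ⟨δ, hδ, hδU⟩ := Metric.mem_nhds_iff.1 hU
  set θ := (1 - (δ / (2 * x + δ)) ^ 2) ^ 2
  have hθ1 : θ < 1 := by
    have hq : δ / (2 * x + δ) < 1 := (div_lt_one (by positivity)).2 (by linarith)
    have hq2 := pow_lt_one₀ (by positivity) hq two_ne_zero
    exact pow_lt_one₀ (sub_nonneg.2 hq2.le) (sub_lt_self 1 (by positivity)) two_ne_zero
  set C := x ^ lam * min (x ^ 2) 1 ^ (-(lam + 1)) * poissonHypergeometric lam θ
  have hC : Tendsto (fun t : ℝ => t * C) (nhdsWithin 0 (Ioi 0)) (nhds 0) := by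
    simpa using (tendsto_id.mul_const C).mono_left (nhdsWithin_le_nhds (a := (0 : ℝ)))
  refine Metric.tendstoUniformlyOn_iff.2 fun ε hε => ?_
  filter_upwards [hC.eventually_lt_const hε, self_mem_nhdsWithin] with t htε ht y hy
  have hxy : δ ≤ |y - x| := by
    rw [← Real.dist_eq, ← not_lt]
    exact fun h => hy.2 (hδU h)
  have ha := inv_one_add_sq_mem_Icc y
  rw [Pi.zero_apply, dist_zero_left, Real.norm_of_nonneg (poissonProfile_nonneg hlam hx ht ha)]
  exact (poissonProfile_le hlam hx ht ha (poissonArg_le_of_le_abs_sub hx hy.1 hδ hxy) hθ1).trans_lt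
    htε

lemma integrableOn_poissonWeight_mul_rpow (hlam : 0 < lam) :
    IntegrableOn (fun y => poissonWeight lam y * y ^ lam) (Ioi 0) := by
  refine (integrable_inv_one_add_sq.const_mul (poissonConst lam)).integrableOn.mono'
    ((measurable_poissonWeight lam).mul (by fun_prop)).aestronglyMeasurable ?_
  filter_upwards [ae_restrict_mem measurableSet_Ioi] with y (hy : 0 < y)
  have hC := poissonConst_pos hlam
  have hw := poissonWeight_nonneg hlam hy
  rw [Real.norm_of_nonneg (by positivity), poissonWeight, mul_assoc]
  gcongr
  rw [div_mul_eq_mul_div, ← Real.mul_rpow hy.le hy.le, Real.rpow_add_one (by positivity),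
    div_le_iff₀ (by positivity), inv_mul_eq_div, mul_div_cancel_right₀ _ (by positivity)]
  exact Real.rpow_le_rpow (by positivity) (by nlinarith) hlam.le

lemma integral_besselPoissonKernel_mul_rpow (hlam : 0 < lam) (ht : 0 < t) (hx : 0 < x) :
    ∫ y in Ioi (0 : ℝ), besselPoissonKernel lam t x y * y ^ lam = x ^ lam := by
  rw [integral_eq_lintegral_of_nonneg_ae ?_ (integrableOn_besselPoissonKernel_mul hlam ht hx
    (integrableOn_poissonWeight_mul_rpow hlam)).aestronglyMeasurable,
    lintegral_besselPoissonKernel_mul_rpow hlam ht hx, ENNReal.toReal_ofReal (by positivity)]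
  filter_upwards [ae_restrict_mem measurableSet_Ioi] with y (hy : 0 < y)
  exact mul_nonneg (besselPoissonKernel_nonneg hlam ht hx hy) (by positivity)

lemma integrableOn_poissonWeight_mul_div_rpow (hlam : 0 < lam) (x : ℝ) :
    IntegrableOn (fun y => poissonWeight lam y * (y ^ lam / x ^ lam)) (Ioi 0) := by
  simp only [← mul_div_assoc]
  exact (integrableOn_poissonWeight_mul_rpow hlam).div_const _

lemma integral_poissonWeight_mul_div_rpow_smul_poissonProfile (hlam : 0 < lam) (ht : 0 < t)
    (hx : 0 < x) :
    ∫ y in Ioi (0 : ℝ), (poissonWeight lam y * (y ^ lam / x ^ lam)) •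
      poissonProfile lam x t (1 + y ^ 2)⁻¹ = 1 := by
  have hkernel : EqOn (fun y => (poissonWeight lam y * (y ^ lam / x ^ lam)) •
      poissonProfile lam x t (1 + y ^ 2)⁻¹)
      (fun y => besselPoissonKernel lam t x y * y ^ lam / x ^ lam) (Ioi 0) := fun y hy => by
    simp only [besselPoissonKernel_eq_poissonWeight_mul hlam ht hx hy, smul_eq_mul]
    ring
  rw [setIntegral_congr_fun measurableSet_Ioi hkernel, integral_div,
    integral_besselPoissonKernel_mul_rpow hlam ht hx, div_self (by positivity)]

lemma tendsto_poissonSemigroup (hlam : 0 < lam) (hx : 0 < x) (hc : ContinuousAt u x)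
    (hu : IntegrableOn (fun y => poissonWeight lam y * u y) (Ioi 0)) :
    Tendsto (fun t => poissonSemigroup lam u t x) (nhdsWithin 0 (Ioi 0)) (nhds (u x)) := by
  have hg : ContinuousAt (fun y => x ^ lam / y ^ lam * u y) x :=
    (continuousAt_const.div (continuousAt_rpow_const x lam (Or.inl hx.ne')) (by positivity)).mul hc
  have hgx : x ^ lam / x ^ lam * u x = u x := by
    rw [div_self (by positivity), one_mul]
  have ht : ∀ᶠ t : ℝ in nhdsWithin 0 (Ioi 0), 0 < t := self_mem_nhdsWithin
  have hpeak := tendsto_setIntegral_smul_peak_smul measurableSet_Ioi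
    (fun y (hy : 0 < y) => mul_nonneg (poissonWeight_nonneg hlam hy)
      (div_nonneg (Real.rpow_nonneg hy.le lam) (Real.rpow_nonneg hx.le lam)))
    (integrableOn_poissonWeight_mul_div_rpow hlam x)
    (ht.mono fun t ht y _ => poissonProfile_nonneg hlam hx ht (inv_one_add_sq_mem_Icc y))
    (ht.mono fun t ht => aestronglyMeasurable_comp_of_isCompact isCompact_Icc
      (continuousOn_poissonProfile ht hx) (by fun_prop) inv_one_add_sq_mem_Icc)
    (fun U hU hxU => tendstoUniformlyOn_poissonProfile hlam hx (hU.mem_nhds hxU))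
    (tendsto_const_nhds.congr' (ht.mono fun t ht =>
      (integral_poissonWeight_mul_div_rpow_smul_poissonProfile hlam ht hx).symm))
    (hu.congr_fun (fun y (hy : 0 < y) => by simp only [smul_eq_mul]; field_simp) measurableSet_Ioi)
    (hg.tendsto.mono_left nhdsWithin_le_nhds)
  rw [hgx] at hpeak
  refine hpeak.congr' (ht.mono fun t ht => ?_)
  beta_reduce
  rw [poissonSemigroup, setIntegral_besselPoissonKernel_mul hlam ht hx]
  refine setIntegral_congr_fun measurableSet_Ioi fun y (hy : 0 < y) => ?_
  simp only [smul_eq_mul]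
  field_simp

end BoundaryValues

lemma rpow_div_one_add_sq_rpow_le {lam y : ℝ} (hlam : 0 < lam) (hy : 0 < y) :
    y ^ lam / (1 + y ^ 2) ^ (lam + 1) ≤ 2 ^ (lam + 1) / (1 + y) ^ (1 + lam) := by
  have hnum : y ^ lam ≤ (1 + y) ^ (1 + lam) :=
    (Real.rpow_le_rpow hy.le (by linarith) hlam.le).trans
      (Real.rpow_le_rpow_of_exponent_le (by linarith) (by linarith))
  have hden : (1 + y) ^ (1 + lam) * (1 + y) ^ (1 + lam) ≤
      2 ^ (lam + 1) * (1 + y ^ 2) ^ (lam + 1) := by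
    rw [← Real.mul_rpow (by positivity) (by positivity),
      ← Real.mul_rpow (by positivity) (by positivity), add_comm 1 lam]
    exact Real.rpow_le_rpow (by positivity) (by nlinarith [sq_nonneg (y - 1)]) (by linarith)
  rw [div_le_div_iff₀ (by positivity) (by positivity)]
  exact (mul_le_mul_of_nonneg_right hnum (by positivity)).trans hden

lemma integrableOn_rpow_div_one_add_sq_rpow_mul {lam : ℝ} {u : ℝ → ℝ} (hlam : 0 < lam)
    (hu : ContinuousOn u (Ioi 0))
    (huL : IntegrableOn (fun y => |u y| / (1 + y) ^ (1 + lam)) (Ioi 0)) :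
    IntegrableOn (fun y => y ^ lam / (1 + y ^ 2) ^ (lam + 1) * u y) (Ioi 0) := by
  refine (huL.const_mul (2 ^ (lam + 1))).mono'
    ((by fun_prop : Measurable _).aestronglyMeasurable.mul
      (hu.aestronglyMeasurable measurableSet_Ioi)) ?_
  filter_upwards [ae_restrict_mem measurableSet_Ioi] with y (hy : 0 < y)
  rw [norm_mul, Real.norm_of_nonneg (by positivity), Real.norm_eq_abs, mul_div_left_comm, mul_comm]
  exact mul_le_mul_of_nonneg_left (rpow_div_one_add_sq_rpow_le hlam hy) (abs_nonneg _)

theorem bessel_harmonic_extension_general {lam : ℝ} (hlam : 0 < lam) {f : ℝ → ℝ}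
    (hf : IntegrableOn (fun y => y ^ lam / (1 + y ^ 2) ^ (lam + 1) * f y) (Ioi 0)) :
    (∀ x : ℝ, 0 < x → ∀ t : ℝ, 0 < t →
      IntegrableOn (fun y => besselPoissonKernel lam t x y * f y) (Ioi 0)) ∧
    ContDiffOn ℝ (⊤ : ℕ∞) (fun p : ℝ × ℝ => poissonSemigroup lam f p.2 p.1)
      (Ioi (0 : ℝ) ×ˢ Ioi (0 : ℝ)) ∧
    (∀ x : ℝ, 0 < x → ∀ t : ℝ, 0 < t →
      deriv (deriv fun s => poissonSemigroup lam f s x) t +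
          deriv (deriv fun z => poissonSemigroup lam f t z) x -
          lam * (lam - 1) / x ^ 2 * poissonSemigroup lam f t x = 0) ∧
    (∀ x : ℝ, 0 < x → ContinuousAt f x →
      Tendsto (fun t => poissonSemigroup lam f t x) (nhdsWithin 0 (Ioi 0)) (nhds (f x))) := by
  have hu : IntegrableOn (fun y => poissonWeight lam y * f y) (Ioi 0) := by
    simp only [poissonWeight, mul_assoc]
    exact hf.const_mul _
  exact ⟨fun x hx t ht => integrableOn_besselPoissonKernel_mul hlam ht hx hu,
    contDiffOn_poissonSemigroup hlam hu,
    fun x hx t ht => poissonSemigroup_pde hlam ht hx hu,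
    fun x hx hc => tendsto_poissonSemigroup hlam hx hc hu⟩

/-- The Bessel harmonic extension of `f ∈ C^α_+`: well defined, `C²`, solves the
extension equation and attains the boundary datum. -/
theorem bessel_harmonic_extension
    (lam α : ℝ) (hlam : 0 < lam) (hα0 : 0 < α) (hα1 : α < 1)
    (f : ℝ → ℝ) (hf : MemHolderPlus α f)
    (hfL : IntegrableOn (fun y => |f y| / (1 + y) ^ (1 + lam)) (Set.Ioi 0)) :
    (∀ x : ℝ, 0 < x → ∀ t : ℝ, 0 < t →
      IntegrableOn (fun y => besselPoissonKernel lam t x y * f y) (Set.Ioi 0)) ∧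
    ContDiffOn ℝ 2 (fun p : ℝ × ℝ => poissonSemigroup lam f p.2 p.1)
      (Set.Ioi (0 : ℝ) ×ˢ Set.Ioi (0 : ℝ)) ∧
    (∀ x : ℝ, 0 < x → ∀ t : ℝ, 0 < t →
      deriv (deriv (fun s => poissonSemigroup lam f s x)) t +
          deriv (deriv (fun z => poissonSemigroup lam f t z)) x -
          lam * (lam - 1) / x ^ 2 * poissonSemigroup lam f t x = 0) ∧
    (∀ x : ℝ, 0 < x →
      Tendsto (fun t => poissonSemigroup lam f t x) (nhdsWithin 0 (Set.Ioi 0))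
        (nhds (f x))) := by
  obtain ⟨hint, hsmooth, hpde, hlim⟩ := bessel_harmonic_extension_general hlam
    (integrableOn_rpow_div_one_add_sq_rpow_mul hlam hf.1 hfL)
  exact ⟨hint, hsmooth.of_le (by norm_cast), hpde,
    fun x hx => hlim x hx (hf.1.continuousAt (isOpen_Ioi.mem_nhds hx))⟩
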